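/- For N = 2n+1 odd and c = (1 2 ... N), the zeta polynomial of the interval [e,c]_3 in (A_N, ≤_3) is Z(q) = [q/(q(2n+1) - n)] · C(q(2n+1) - n, n); i.e., the number of (q-1)-multichains in [e,c]_3 equals this quantity for every positive integer q. -/

import Mathlib

open Equiv Equiv.Perm

/-- The word length of `x` with respect to a generating set `T`. -/
noncomputable def lenT {G : Type*} [Group G] (T : Set G) (x : G) : ℕ :=
  sInf {n | ∃ l : List G, (∀ t ∈ l, t ∈ T) ∧ l.prod = x ∧ l.length = n}

/-- The `T`-prefix order. -/
def leT {G : Type*} [Group G] (T : Set G) (x y : G) : Prop :=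
  lenT T y = lenT T x + lenT T (x⁻¹ * y)

/-- The set of 3-cycles of the symmetric group on `Fin N`. -/
def threeCycles (N : ℕ) : Set (Perm (Fin N)) := {σ | σ.IsThreeCycle}

/-- The set of transpositions of the symmetric group on `Fin N`. -/
def transpositions (N : ℕ) : Set (Perm (Fin N)) := {σ | σ.IsSwap}

/-- The number of odd cycles of a permutation, counting fixed points. -/
def ocyc {N : ℕ} (x : Perm (Fin N)) : ℕ :=
  (x.cycleType.filter (fun n => Odd n)).card + (N - x.cycleType.sum)

/-!
A permutation `w` of odd order has word length `absLength w / 2` with respect to 3-cycles, where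
`absLength` counts points minus cycles. Hence, below a permutation of odd order, the 3-cycle prefix
order is the absolute order restricted to those `u ≤ w` for which `u` and `u⁻¹ * w` both have odd
order, and `m`-multichains below the long cycle correspond to length-additive factorizations of it
into `m + 1` permutations of odd order.

These factorizations are counted by a recursion which keeps track of points that certain factors
have to fix. If the first factor moves `x`, say `x ↦ a ↦ b`, its odd order gives `b ≠ x`, so the
3-cycle on `x, a, b` splits off from it on the left. What remains of the long cycle is a product of
three disjoint cycles, through `x`, `a` and `b`, and what remains of the first factor fixes `x` and
`a`. The Hurwitz move `(u, v) ↦ (u * v * u⁻¹, u)` brings any other factor to the front. With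
`m + 1` factors, `s` of which are allowed to move `x`, the generating functions `F s` therefore
satisfy `F (s + 1) = F s + X ^ 2 * F s * F m * F (m + 1)` and `F 0 = 1`, so that `F s = B ^ s` with
`B = 1 + X ^ 2 * B ^ (2 * m + 1)`, whose coefficients are Raney numbers.
-/

section AbsoluteLength

variable {α : Type*}

/-- The space of rational functions on `α` that are constant on the cycles of `u`. -/
def invariants (u : Perm α) : Submodule ℚ (α → ℚ) where
  carrier := {f | ∀ y, f (u y) = f y}
  add_mem' hf hg y := congrArg₂ (· + ·) (hf y) (hg y)
  zero_mem' _ := rfl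
  smul_mem' c _ hf y := congrArg (c * ·) (hf y)

/-- The absolute length of a permutation, i.e. its word length with respect to transpositions,
encoded as the codimension of its space of invariant functions. -/
noncomputable def absLength (u : Perm α) : ℕ :=
  Module.finrank ℚ ((α → ℚ) ⧸ invariants u)

theorem apply_eq_of_mem_invariants_of_sameCycle {u : Perm α} {f : α → ℚ} (hf : f ∈ invariants u)
    {x y : α} (h : u.SameCycle x y) : f x = f y := by
  obtain ⟨k, rfl⟩ := h
  induction k with
  | zero => rfl
  | succ k ih => rw [ih, zpow_add_one, (Commute.zpow_self u _).eq, Perm.mul_apply, hf]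
  | pred k ih =>
    rw [ih, ← hf ((u ^ (-(k : ℤ) - 1)) x), ← Perm.mul_apply, ← zpow_one_add, add_sub_cancel]

theorem single_mem_invariants [DecidableEq α] {u : Perm α} {x : α} (h : u x = x) (r : ℚ) :
    (Pi.single x r : α → ℚ) ∈ invariants u := fun y => by
  have hy : u y = x ↔ y = x := by rw [← u.apply_eq_iff_eq (x := y), h]
  simp only [Pi.single_apply, hy]

theorem mem_invariants_swap [DecidableEq α] {x y : α} {f : α → ℚ} :
    f ∈ invariants (swap x y) ↔ f x = f y := by
  refine ⟨fun h => by simpa using (h x).symm, fun h z => ?_⟩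
  rw [swap_apply_def]
  split_ifs <;> simp_all

theorem invariants_inf_le_mul (u v : Perm α) :
    invariants u ⊓ invariants v ≤ invariants (u * v) := fun f hf y => by
  rw [Perm.mul_apply, hf.1, hf.2]

theorem invariants_one : invariants (1 : Perm α) = ⊤ :=
  eq_top_iff.2 fun _ _ _ => rfl

theorem eq_one_of_invariants_eq_top {u : Perm α} (h : invariants u = ⊤) : u = 1 := by
  classical
  ext y
  by_contra hy
  have hsingle : (Pi.single y 1 : α → ℚ) ∈ invariants u := h ▸ Submodule.mem_top
  simpa [Pi.single_apply, show u y ≠ y from hy] using hsingle y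

theorem invariants_sup_eq_top_of_disjoint {u v : Perm α} (h : Disjoint u v) :
    invariants u ⊔ invariants v = ⊤ := by
  classical
  refine eq_top_iff.2 fun f _ => Submodule.mem_sup.2
    ⟨fun y => if u y = y then f y else 0, fun y => ?_,
      fun y => if u y = y then 0 else f y, fun y => ?_, ?_⟩
  · by_cases hy : u y = y <;> simp [hy]
  · have hcomm : u (v y) = v (u y) := congrArg (· y) h.commute.eq
    rcases h y with hy | hy
    · simp [hy, hcomm]
    · simp [hy]
  · ext y
    by_cases hy : u y = y <;> simp [hy]

theorem eq_of_sameCycle_of_invariants_sup_eq_top {u v : Perm α}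
    (h : invariants u ⊔ invariants v = ⊤) {x y : α} (hu : u.SameCycle x y)
    (hv : v.SameCycle x y) : x = y := by
  classical
  obtain ⟨f, hf, g, hg, hfg⟩ := Submodule.mem_sup.1
    (h ▸ Submodule.mem_top : (Pi.single x 1 : α → ℚ) ∈ invariants u ⊔ invariants v)
  have heq : (Pi.single x 1 : α → ℚ) x = (Pi.single x 1 : α → ℚ) y := by
    rw [← hfg, Pi.add_apply, Pi.add_apply, apply_eq_of_mem_invariants_of_sameCycle hf hu,
      apply_eq_of_mem_invariants_of_sameCycle hg hv]
  by_contra hxy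
  simp [Ne.symm hxy] at heq

theorem absLength_one : absLength (1 : Perm α) = 0 := by
  rw [absLength, invariants_one]
  exact Module.finrank_zero_of_subsingleton

theorem absLength_conj (u v : Perm α) : absLength (u * v * u⁻¹) = absLength v := by
  refine (Submodule.Quotient.equiv _ _ (LinearEquiv.funCongrLeft ℚ ℚ u.symm) ?_).finrank_eq.symm
  ext f
  rw [Submodule.mem_map_equiv]
  refine ⟨fun hf y => ?_, fun hf y => ?_⟩
  · simpa [LinearEquiv.funCongrLeft, LinearMap.funLeft] using hf (u⁻¹ y)
  · simpa [LinearEquiv.funCongrLeft, LinearMap.funLeft] using hf (u y)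

theorem absLength_swap [DecidableEq α] {x y : α} (h : x ≠ y) : absLength (swap x y) = 1 := by
  let φ : (α → ℚ) →ₗ[ℚ] ℚ := (LinearMap.proj x : (α → ℚ) →ₗ[ℚ] ℚ) - LinearMap.proj y
  have hker : invariants (swap x y) = LinearMap.ker φ := by
    ext f
    simp [φ, mem_invariants_swap, sub_eq_zero]
  have hφ : Function.Surjective φ := fun r => ⟨Pi.single x r, by simp [φ, h.symm]⟩
  rw [absLength, hker, (φ.quotKerEquivOfSurjective hφ).finrank_eq, Module.finrank_self]

variable [Finite α]

theorem absLength_add_finrank_invariants (u : Perm α) :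
    absLength u + Module.finrank ℚ (invariants u) = Module.finrank ℚ (α → ℚ) :=
  Submodule.finrank_quotient_add_finrank _

theorem eq_one_of_absLength_eq_zero {u : Perm α} (h : absLength u = 0) : u = 1 := by
  refine eq_one_of_invariants_eq_top (Submodule.eq_top_of_finrank_eq ?_)
  rw [← absLength_add_finrank_invariants u, h, zero_add]

theorem finrank_invariants_sup_add_inf (u v : Perm α) :
    absLength u + absLength v + Module.finrank ℚ ↥(invariants u ⊔ invariants v)
      + Module.finrank ℚ ↥(invariants u ⊓ invariants v) = 2 * Module.finrank ℚ (α → ℚ) := by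
  have := Submodule.finrank_sup_add_finrank_inf_eq (invariants u) (invariants v)
  have := absLength_add_finrank_invariants u
  have := absLength_add_finrank_invariants v
  omega

theorem absLength_mul_le (u v : Perm α) : absLength (u * v) ≤ absLength u + absLength v := by
  have := finrank_invariants_sup_add_inf u v
  have := absLength_add_finrank_invariants (u * v)
  have := Submodule.finrank_mono (invariants_inf_le_mul u v)
  have := (invariants u ⊔ invariants v).finrank_le
  omega

theorem invariants_sup_eq_top_of_absLength_mul {u v : Perm α}
    (h : absLength u + absLength v = absLength (u * v)) : invariants u ⊔ invariants v = ⊤ := by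
  apply Submodule.eq_top_of_finrank_eq
  have := finrank_invariants_sup_add_inf u v
  have := absLength_add_finrank_invariants (u * v)
  have := Submodule.finrank_mono (invariants_inf_le_mul u v)
  have := (invariants u ⊔ invariants v).finrank_le
  omega

theorem invariants_mul_of_absLength_mul {u v : Perm α}
    (h : absLength u + absLength v = absLength (u * v)) :
    invariants (u * v) = invariants u ⊓ invariants v := by
  refine (Submodule.eq_of_le_of_finrank_eq (invariants_inf_le_mul u v) ?_).symm
  have hsum := finrank_invariants_sup_add_inf u v
  have := absLength_add_finrank_invariants (u * v)
  rw [invariants_sup_eq_top_of_absLength_mul h, finrank_top] at hsum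
  omega

theorem absLength_mul_of_invariants_sup_eq_top {u v : Perm α}
    (hsup : invariants u ⊔ invariants v = ⊤) (hle : invariants (u * v) ≤ invariants u) :
    absLength u + absLength v = absLength (u * v) := by
  have hinf : invariants (u * v) = invariants u ⊓ invariants v := by
    refine le_antisymm (fun f hf => ⟨hle hf, fun y => ?_⟩) (invariants_inf_le_mul u v)
    rw [← hle hf (v y), ← hf y, Perm.mul_apply]
  have hsum := finrank_invariants_sup_add_inf u v
  have := absLength_add_finrank_invariants (u * v)
  rw [hsup, finrank_top, ← hinf] at hsum
  omega

theorem absLength_mul_of_disjoint {u v : Perm α} (h : Disjoint u v) :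
    absLength u + absLength v = absLength (u * v) := by
  refine absLength_mul_of_invariants_sup_eq_top (invariants_sup_eq_top_of_disjoint h)
    fun f hf y => ?_
  rcases h y with hy | hy
  · rw [hy]
  · simpa [hy] using hf y

theorem absLength_formPerm_cons [DecidableEq α] (x : α) (l : List α) (h : (x :: l).Nodup) :
    absLength (x :: l).formPerm = l.length := by
  induction l generalizing x with
  | nil => simp [absLength_one]
  | cons y l ih =>
    have hx : x ∉ y :: l := (List.nodup_cons.1 h).1
    have hxy : x ≠ y := fun e => hx (by simp [e])
    have hfix : (y :: l).formPerm x = x := List.formPerm_apply_of_notMem hx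
    rw [List.formPerm_cons_cons, ← absLength_mul_of_invariants_sup_eq_top, ih y h.of_cons,
      absLength_swap hxy, List.length_cons, add_comm]
    · refine eq_top_iff.2 fun f _ => Submodule.mem_sup.2
        ⟨f - Pi.single x (f x - f y), ?_, Pi.single x (f x - f y),
          single_mem_invariants hfix _, by simp⟩
      simp [mem_invariants_swap, hxy.symm]
    · intro f hf
      rw [mem_invariants_swap]
      simpa [hfix] using (hf x).symm

end AbsoluteLength

section OddOrder

variable {α : Type*}

theorem odd_orderOf_conj {G : Type*} [Group G] (u v : G) :
    Odd (orderOf (u * v * u⁻¹)) ↔ Odd (orderOf v) := by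
  rw [SemiconjBy.orderOf_eq u (SemiconjBy.conj_mk u v)]

theorem odd_orderOf_mul_of_disjoint {u v : Perm α} (h : Disjoint u v) :
    Odd (orderOf (u * v)) ↔ Odd (orderOf u) ∧ Odd (orderOf v) := by
  rw [h.orderOf]
  refine ⟨fun ho => ⟨ho.of_dvd_nat (Nat.dvd_lcm_left _ _), ho.of_dvd_nat (Nat.dvd_lcm_right _ _)⟩,
    fun ⟨hu, hv⟩ => (hu.mul hv).of_dvd_nat (Nat.lcm_dvd_mul _ _)⟩

theorem apply_apply_ne_of_odd_orderOf {u : Perm α} (h : Odd (orderOf u)) {x : α} (hx : u x ≠ x) :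
    u (u x) ≠ x := fun hxx => by
  obtain ⟨k, hk⟩ := h
  have hpow : (u ^ (2 * k)) x = x := by
    rw [pow_mul]
    exact pow_apply_eq_self_of_apply_eq_self (by rwa [pow_two]) k
  have hone : (u ^ (2 * k + 1)) x = x := by rw [← hk, pow_orderOf_eq_one, Perm.one_apply]
  rw [pow_succ', Perm.mul_apply, hpow] at hone
  exact hx hone

theorem sign_of_odd_orderOf [Fintype α] [DecidableEq α] {u : Perm α} (h : Odd (orderOf u)) :
    sign u = 1 := by
  have hpow : sign u ^ orderOf u = 1 := by rw [← map_pow, pow_orderOf_eq_one, map_one]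
  rcases Int.units_eq_one_or (sign u) with hs | hs
  · exact hs
  · rw [hs, h.neg_one_pow] at hpow
    rw [hs, hpow]

end OddOrder

section FormPerm

variable {α : Type*} [DecidableEq α]

theorem disjoint_formPerm {l : List α} {v : Perm α} (h : ∀ y ∈ l, v y = y) :
    Disjoint l.formPerm v := fun y => by
  by_cases hy : y ∈ l
  · exact Or.inr (h y hy)
  · exact Or.inl (List.formPerm_apply_of_notMem hy)

theorem disjoint_formPerm_formPerm {l l' : List α} (h : l.Disjoint l') :
    Disjoint l.formPerm l'.formPerm :=
  disjoint_formPerm fun _ hy => List.formPerm_apply_of_notMem (h hy)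

theorem formPerm_cons_append_cons (x a : α) (l l' : List α) (h : (x :: (l ++ a :: l')).Nodup) :
    (x :: (l ++ a :: l')).formPerm = swap x a * ((x :: l).formPerm * (a :: l').formPerm) := by
  induction l generalizing x with
  | nil => simp
  | cons y l ih =>
    obtain ⟨hx, hyl⟩ := List.nodup_cons.1 h
    have hy : y ∉ l ++ a :: l' := (List.nodup_cons.1 hyl).1
    have hxa : x ≠ a := fun e => hx (by simp [e])
    have hya : y ≠ a := fun e => hy (by simp [e])
    have hswap : swap x y * swap y a = swap x a * swap x y := by
      rw [mul_swap_eq_swap_mul, swap_apply_right, swap_apply_of_ne_of_ne hxa.symm hya.symm]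
    rw [List.cons_append, List.formPerm_cons_cons, ih y hyl, List.formPerm_cons_cons, ← mul_assoc,
      hswap, mul_assoc, mul_assoc]

theorem exists_formPerm_eq_cycleOf [Fintype α] (v : Perm α) (x : α) :
    ∃ l : List α, (x :: l).Nodup ∧ (∀ y, y ∈ x :: l ↔ v.SameCycle x y) ∧
      (x :: l).formPerm = v.cycleOf x := by
  by_cases hx : x ∈ v.support
  · obtain ⟨l, hl⟩ : ∃ l, v.toList x = x :: l := by
      cases h : v.toList x with
      | nil => exact absurd hx (toList_eq_nil_iff.1 h)
      | cons y l => exact ⟨l, by simpa [h] using toList_getElem_zero v x hx⟩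
    refine ⟨l, hl ▸ nodup_toList v x, fun y => ?_, hl ▸ formPerm_toList v x⟩
    rw [← hl, mem_toList_iff, and_iff_left hx]
  · have hfix : Function.IsFixedPt v x := notMem_support.1 hx
    refine ⟨[], List.nodup_singleton x, fun y => ?_, ?_⟩
    · refine List.mem_singleton.trans ⟨fun e => e ▸ SameCycle.refl v x, fun e => ?_⟩
      exact (e.eq_of_left hfix).symm
    · rw [List.formPerm_singleton, (cycleOf_eq_one_iff v).2 hfix]

variable [Finite α]

theorem orderOf_formPerm_cons {x : α} {l : List α} (h : (x :: l).Nodup) :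
    orderOf (x :: l).formPerm = l.length + 1 := by
  cases nonempty_fintype α
  cases l with
  | nil => simp
  | cons y l =>
    rw [(List.isCycle_formPerm h (by simp)).orderOf, List.support_formPerm_of_nodup _ h (by simp),
      List.toFinset_card_of_nodup h, List.length_cons (a := x)]

theorem odd_orderOf_formPerm_mul {x : α} {l : List α} (h : (x :: l).Nodup) {v : Perm α}
    (hv : ∀ y ∈ x :: l, v y = y) :
    Odd (orderOf ((x :: l).formPerm * v)) ↔ Even l.length ∧ Odd (orderOf v) := by
  rw [odd_orderOf_mul_of_disjoint (disjoint_formPerm hv), orderOf_formPerm_cons h, Nat.odd_add_one,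
    Nat.not_odd_iff_even]

theorem absLength_formPerm_mul {x : α} {l : List α} (h : (x :: l).Nodup) {v : Perm α}
    (hv : ∀ y ∈ x :: l, v y = y) :
    absLength ((x :: l).formPerm * v) = l.length + absLength v := by
  rw [← absLength_mul_of_disjoint (disjoint_formPerm hv), absLength_formPerm_cons x l h]

end FormPerm

section ThreeCycle

variable {α : Type*} [DecidableEq α] {x a b : α}

/-- The permutation `x ↦ a ↦ b ↦ x`, a 3-cycle when `x`, `a`, `b` are distinct. -/
def threeCycle (x a b : α) : Perm α := swap x a * swap a b

theorem threeCycle_apply_left (hxa : x ≠ a) (hxb : x ≠ b) : threeCycle x a b x = a := by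
  simp [threeCycle, swap_apply_of_ne_of_ne hxa hxb]

theorem threeCycle_apply_middle (hxb : x ≠ b) (hab : a ≠ b) : threeCycle x a b a = b := by
  simp [threeCycle, swap_apply_of_ne_of_ne hxb.symm hab.symm]

theorem threeCycle_apply_right : threeCycle x a b b = x := by
  simp [threeCycle]

theorem threeCycle_inv_mul_fixes_iff {x a b : α} (hxa : x ≠ a) (hxb : x ≠ b) (hab : a ≠ b)
    (u : Perm α) : ((threeCycle x a b)⁻¹ * u) x = x ∧ ((threeCycle x a b)⁻¹ * u) a = a ↔
      u x = a ∧ u a = b := by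
  rw [Perm.mul_apply, Perm.mul_apply, inv_eq_iff_eq, inv_eq_iff_eq, threeCycle_apply_left hxa hxb,
    threeCycle_apply_middle hxb hab]

theorem threeCycle_eq_sq (hxa : x ≠ a) (hxb : x ≠ b) (hab : a ≠ b) :
    threeCycle x b a = threeCycle x a b * threeCycle x a b := by
  ext y
  simp only [threeCycle, Perm.mul_apply, swap_apply_def]
  grind

theorem formPerm_eq_threeCycle_mul {l₁ l₂ l₃ : List α}
    (h : (x :: (l₁ ++ a :: (l₂ ++ b :: l₃))).Nodup) :
    (x :: (l₁ ++ a :: (l₂ ++ b :: l₃))).formPerm =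
      threeCycle x a b * ((x :: l₁).formPerm * ((a :: l₂).formPerm * (b :: l₃).formPerm)) := by
  have hcomm : Commute (x :: l₁).formPerm (swap a b) := by
    rw [← List.formPerm_pair]
    refine (disjoint_formPerm_formPerm fun y hy hy' => ?_).commute
    grind
  rw [formPerm_cons_append_cons _ _ _ _ h,
    formPerm_cons_append_cons _ _ _ _ (List.nodup_append.1 h.of_cons).2.1, hcomm.left_comm,
    threeCycle, mul_assoc]

theorem threeCycle_mul_formPerm_mul {l₁ l₂ l₃ : List α}
    (h : (x :: (l₁ ++ a :: (l₂ ++ b :: l₃))).Nodup) (r : Perm α) :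
    threeCycle x a b * ((x :: l₁).formPerm * ((a :: l₂).formPerm * ((b :: l₃).formPerm * r))) =
      (x :: (l₁ ++ a :: (l₂ ++ b :: l₃))).formPerm * r := by
  simp only [formPerm_eq_threeCycle_mul h, mul_assoc]

theorem exists_threeCycle_eq_of_isThreeCycle [Fintype α] {t : Perm α} (h : t.IsThreeCycle) :
    ∃ x a b, x ≠ a ∧ x ≠ b ∧ a ≠ b ∧ t = threeCycle x a b := by
  obtain ⟨x, hx⟩ : t.support.Nonempty :=
    Finset.nonempty_iff_ne_empty.2 (mt support_eq_empty_iff.1 h.isCycle.ne_one)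
  have hnodup := h.nodup_iff_mem_support.2 hx
  exact ⟨x, t x, t (t x), by grind, by grind, by grind, h.eq_swap_mul_swap_iff_mem_support.2 hx⟩

theorem isThreeCycle_threeCycle [Fintype α] (hxa : x ≠ a) (hxb : x ≠ b) (hab : a ≠ b) :
    (threeCycle x a b).IsThreeCycle := by
  rw [threeCycle, swap_comm x a]
  exact isThreeCycle_swap_mul_swap_same hxa.symm hab hxb

theorem exists_formPerm_mul_of_not_sameCycle [Fintype α] {v : Perm α}
    (hxa : ¬ v.SameCycle x a) (hxb : ¬ v.SameCycle x b) (hab : ¬ v.SameCycle a b) :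
    ∃ (l₁ l₂ l₃ : List α) (r : Perm α), (x :: (l₁ ++ a :: (l₂ ++ b :: l₃))).Nodup ∧
      (∀ y ∈ x :: (l₁ ++ a :: (l₂ ++ b :: l₃)), r y = y) ∧
      (x :: l₁).formPerm = v.cycleOf x ∧ (a :: l₂).formPerm = v.cycleOf a ∧
      v = (x :: l₁).formPerm * ((a :: l₂).formPerm * ((b :: l₃).formPerm * r)) := by
  obtain ⟨l₁, hn₁, hl₁, hf₁⟩ := exists_formPerm_eq_cycleOf v x
  obtain ⟨l₂, hn₂, hl₂, hf₂⟩ := exists_formPerm_eq_cycleOf v a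
  obtain ⟨l₃, hn₃, hl₃, hf₃⟩ := exists_formPerm_eq_cycleOf v b
  have hd₁₂ : (x :: l₁).Disjoint (a :: l₂) := fun y hy hy' =>
    hxa (((hl₁ y).1 hy).trans ((hl₂ y).1 hy').symm)
  have hd₁₃ : (x :: l₁).Disjoint (b :: l₃) := fun y hy hy' =>
    hxb (((hl₁ y).1 hy).trans ((hl₃ y).1 hy').symm)
  have hd₂₃ : (a :: l₂).Disjoint (b :: l₃) := fun y hy hy' =>
    hab (((hl₂ y).1 hy).trans ((hl₃ y).1 hy').symm)
  have hnodup : (x :: (l₁ ++ a :: (l₂ ++ b :: l₃))).Nodup := by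
    rw [← List.cons_append]
    exact hn₁.append (hn₂.append hn₃ hd₂₃) (List.disjoint_append_right.2 ⟨hd₁₂, hd₁₃⟩)
  refine ⟨l₁, l₂, l₃, ((x :: l₁).formPerm * ((a :: l₂).formPerm * (b :: l₃).formPerm))⁻¹ * v,
    hnodup, fun y hy => ?_, hf₁, hf₂, by group⟩
  have hfix {l : List α} {z : α} : z ∉ l → l.formPerm z = z := List.formPerm_apply_of_notMem
  rw [Perm.mul_apply, inv_eq_iff_eq, Perm.mul_apply, Perm.mul_apply]
  rw [← List.cons_append, List.mem_append, ← List.cons_append, List.mem_append] at hy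
  rcases hy with hy | hy | hy
  · rw [hfix (hd₁₃ hy), hfix (hd₁₂ hy), hf₁, ((hl₁ y).1 hy).cycleOf_apply]
  · have hvy : v y ∈ a :: l₂ := (hl₂ _).2 ((hl₂ y).1 hy).apply_right
    rw [hfix (hd₂₃ hy), hf₂, ((hl₂ y).1 hy).cycleOf_apply, hfix (hd₁₂.symm hvy)]
  · have hvy : v y ∈ b :: l₃ := (hl₃ _).2 ((hl₃ y).1 hy).apply_right
    rw [hf₃, ((hl₃ y).1 hy).cycleOf_apply, hfix (hd₂₃.symm hvy), hfix (hd₁₃.symm hvy)]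

variable [Finite α]

theorem absLength_threeCycle (hxa : x ≠ a) (hxb : x ≠ b) (hab : a ≠ b) :
    absLength (threeCycle x a b) = 2 := by
  have hform : threeCycle x a b = [x, a, b].formPerm := by simp [threeCycle]
  rw [hform, absLength_formPerm_cons x [a, b] (by simp [*])]
  rfl

section Merge

variable {l₁ l₂ l₃ : List α} {r : Perm α}

theorem absLength_formPerm_mul_formPerm_mul_formPerm_mul
    (h : (x :: (l₁ ++ a :: (l₂ ++ b :: l₃))).Nodup)
    (hr : ∀ y ∈ x :: (l₁ ++ a :: (l₂ ++ b :: l₃)), r y = y) :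
    absLength ((x :: l₁).formPerm * ((a :: l₂).formPerm * ((b :: l₃).formPerm * r))) =
      l₁.length + (l₂.length + (l₃.length + absLength r)) := by
  rw [absLength_formPerm_mul, absLength_formPerm_mul, absLength_formPerm_mul] <;>
    grind [Perm.mul_apply, List.formPerm_apply_of_notMem]

theorem odd_orderOf_formPerm_mul_formPerm_mul_formPerm_mul
    (h : (x :: (l₁ ++ a :: (l₂ ++ b :: l₃))).Nodup)
    (hr : ∀ y ∈ x :: (l₁ ++ a :: (l₂ ++ b :: l₃)), r y = y) :
    Odd (orderOf ((x :: l₁).formPerm * ((a :: l₂).formPerm * ((b :: l₃).formPerm * r)))) ↔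
      Even l₁.length ∧ Even l₂.length ∧ Even l₃.length ∧ Odd (orderOf r) := by
  rw [odd_orderOf_formPerm_mul, odd_orderOf_formPerm_mul, odd_orderOf_formPerm_mul] <;>
    grind [Perm.mul_apply, List.formPerm_apply_of_notMem]

theorem absLength_threeCycle_mul_formPerm_mul
    (h : (x :: (l₁ ++ a :: (l₂ ++ b :: l₃))).Nodup)
    (hr : ∀ y ∈ x :: (l₁ ++ a :: (l₂ ++ b :: l₃)), r y = y) :
    absLength (threeCycle x a b *
      ((x :: l₁).formPerm * ((a :: l₂).formPerm * ((b :: l₃).formPerm * r)))) =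
      l₁.length + (l₂.length + (l₃.length + 2)) + absLength r := by
  rw [threeCycle_mul_formPerm_mul h, absLength_formPerm_mul h hr]
  simp only [List.length_append, List.length_cons, add_assoc, Nat.reduceAdd]

theorem odd_orderOf_threeCycle_mul_formPerm_mul
    (h : (x :: (l₁ ++ a :: (l₂ ++ b :: l₃))).Nodup)
    (hr : ∀ y ∈ x :: (l₁ ++ a :: (l₂ ++ b :: l₃)), r y = y) :
    Odd (orderOf (threeCycle x a b *
      ((x :: l₁).formPerm * ((a :: l₂).formPerm * ((b :: l₃).formPerm * r))))) ↔
      Even (l₁.length + (l₂.length + l₃.length)) ∧ Odd (orderOf r) := by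
  rw [threeCycle_mul_formPerm_mul h, odd_orderOf_formPerm_mul h hr]
  simp only [List.length_append, List.length_cons]
  grind

end Merge

theorem absLength_threeCycle_mul {v : Perm α} (hxa : ¬ v.SameCycle x a)
    (hxb : ¬ v.SameCycle x b) (hab : ¬ v.SameCycle a b) :
    absLength (threeCycle x a b * v) = 2 + absLength v := by
  cases nonempty_fintype α
  obtain ⟨l₁, l₂, l₃, r, h, hr, -, -, rfl⟩ := exists_formPerm_mul_of_not_sameCycle hxa hxb hab
  rw [absLength_threeCycle_mul_formPerm_mul h hr,
    absLength_formPerm_mul_formPerm_mul_formPerm_mul h hr]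
  omega

theorem odd_orderOf_threeCycle_mul {v : Perm α} (hxa : ¬ v.SameCycle x a)
    (hxb : ¬ v.SameCycle x b) (hab : ¬ v.SameCycle a b) (hv : Odd (orderOf v)) :
    Odd (orderOf (threeCycle x a b * v)) := by
  cases nonempty_fintype α
  obtain ⟨l₁, l₂, l₃, r, h, hr, -, -, rfl⟩ := exists_formPerm_mul_of_not_sameCycle hxa hxb hab
  rw [odd_orderOf_formPerm_mul_formPerm_mul_formPerm_mul h hr] at hv
  rw [odd_orderOf_threeCycle_mul_formPerm_mul h hr]
  exact ⟨hv.1.add (hv.2.1.add hv.2.2.1), hv.2.2.2⟩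

theorem odd_orderOf_threeCycle_mul_iff_of_fixed {v : Perm α} (hxa : x ≠ a) (hxb : x ≠ b)
    (hab : a ≠ b) (hx : v x = x) (ha : v a = a) :
    Odd (orderOf (threeCycle x a b * v)) ↔ Odd (orderOf v) := by
  cases nonempty_fintype α
  obtain ⟨l₁, l₂, l₃, r, h, hr, hl₁, hl₂, hv⟩ :=
    exists_formPerm_mul_of_not_sameCycle (fun h => hxa (h.eq_of_left hx))
      (fun h => hxb (h.eq_of_left hx)) (fun h => hab (h.eq_of_left ha))
  have hlen {z : α} {l : List α} (hnodup : (z :: l).Nodup) (hz : v z = z)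
      (hl : (z :: l).formPerm = v.cycleOf z) : l.length = 0 := by
    have := orderOf_formPerm_cons hnodup
    rw [hl, (cycleOf_eq_one_iff v).2 hz, orderOf_one] at this
    omega
  rw [hv, odd_orderOf_formPerm_mul_formPerm_mul_formPerm_mul h hr,
    odd_orderOf_threeCycle_mul_formPerm_mul h hr, hlen (by grind) hx hl₁, hlen (by grind) ha hl₂]
  simp

theorem absLength_threeCycle_add_of_fixed {v : Perm α} (hxa : x ≠ a) (hxb : x ≠ b)
    (hab : a ≠ b) (hx : v x = x) (ha : v a = a) :
    absLength (threeCycle x a b) + absLength v = absLength (threeCycle x a b * v) := by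
  rw [absLength_threeCycle hxa hxb hab, absLength_threeCycle_mul (fun h => hxa (h.eq_of_left hx))
    (fun h => hxb (h.eq_of_left hx)) (fun h => hab (h.eq_of_left ha))]

theorem odd_orderOf_threeCycle_mul_of_absLength_add {v : Perm α} (hxa : x ≠ a) (hxb : x ≠ b)
    (hab : a ≠ b) (hv : Odd (orderOf v))
    (h : absLength (threeCycle x a b) + absLength v = absLength (threeCycle x a b * v)) :
    Odd (orderOf (threeCycle x a b * v)) := by
  have hsup := invariants_sup_eq_top_of_absLength_mul h
  have hcycle_xa : (threeCycle x a b).SameCycle x a :=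
    ⟨1, by rw [zpow_one, threeCycle_apply_left hxa hxb]⟩
  have hcycle_ab : (threeCycle x a b).SameCycle a b :=
    ⟨1, by rw [zpow_one, threeCycle_apply_middle hxb hab]⟩
  exact odd_orderOf_threeCycle_mul
    (fun hc => hxa (eq_of_sameCycle_of_invariants_sup_eq_top hsup hcycle_xa hc))
    (fun hc => hxb (eq_of_sameCycle_of_invariants_sup_eq_top hsup (hcycle_xa.trans hcycle_ab) hc))
    (fun hc => hab (eq_of_sameCycle_of_invariants_sup_eq_top hsup hcycle_ab hc)) hv

end ThreeCycle

section WordLength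

variable {G : Type*} [Group G] {T : Set G}

theorem lenT_prod_le_length {l : List G} (hl : ∀ t ∈ l, t ∈ T) : lenT T l.prod ≤ l.length :=
  Nat.sInf_le ⟨l, hl, rfl, rfl⟩

theorem exists_list_length_eq_lenT {l : List G} (hl : ∀ t ∈ l, t ∈ T) :
    ∃ l' : List G, (∀ t ∈ l', t ∈ T) ∧ l'.prod = l.prod ∧ l'.length = lenT T l.prod :=
  Nat.sInf_mem (s := {n | ∃ l' : List G, (∀ t ∈ l', t ∈ T) ∧ l'.prod = l.prod ∧ l'.length = n})
    ⟨l.length, l, hl, rfl, rfl⟩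

/-- Off the subgroup generated by `T` the infimum in `lenT` is taken over the empty set. -/
theorem lenT_eq_zero_of_notMem_closure {x : G} (hx : x ∉ Subgroup.closure T) : lenT T x = 0 := by
  refine Nat.sInf_eq_zero.2 (Or.inr (Set.eq_empty_of_forall_notMem ?_))
  rintro n ⟨l, hl, rfl, -⟩
  exact hx (Subgroup.list_prod_mem _ fun t ht => Subgroup.subset_closure (hl t ht))

end WordLength

section ThreeCycleLength

variable {α : Type*} [Fintype α] [DecidableEq α]

theorem absLength_prod_le {l : List (Perm α)} (hl : ∀ t ∈ l, t.IsThreeCycle) :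
    absLength l.prod ≤ 2 * l.length := by
  induction l with
  | nil => simp [absLength_one]
  | cons t l ih =>
    obtain ⟨x, a, b, hxa, hxb, hab, rfl⟩ :=
      exists_threeCycle_eq_of_isThreeCycle (hl t List.mem_cons_self)
    have := absLength_mul_le (threeCycle x a b) l.prod
    have := absLength_threeCycle hxa hxb hab
    have := ih fun t ht => hl t (List.mem_cons_of_mem _ ht)
    rw [List.prod_cons, List.length_cons]
    omega

theorem odd_orderOf_prod {l : List (Perm α)} (hl : ∀ t ∈ l, t.IsThreeCycle)
    (hlen : absLength l.prod = 2 * l.length) : Odd (orderOf l.prod) := by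
  induction l with
  | nil => simp
  | cons t l ih =>
    obtain ⟨x, a, b, hxa, hxb, hab, rfl⟩ :=
      exists_threeCycle_eq_of_isThreeCycle (hl t List.mem_cons_self)
    have hl' : ∀ t ∈ l, t.IsThreeCycle := fun t ht => hl t (List.mem_cons_of_mem _ ht)
    have := absLength_mul_le (threeCycle x a b) l.prod
    have := absLength_threeCycle hxa hxb hab
    have := absLength_prod_le hl'
    rw [List.prod_cons, List.length_cons] at hlen
    have hadd : absLength (threeCycle x a b) + absLength l.prod =
        absLength (threeCycle x a b * l.prod) := by omega
    rw [List.prod_cons]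
    exact odd_orderOf_threeCycle_mul_of_absLength_add hxa hxb hab (ih hl' (by omega)) hadd

theorem exists_list_isThreeCycle_of_odd_orderOf (u : Perm α) (hu : Odd (orderOf u)) :
    ∃ l : List (Perm α), (∀ t ∈ l, t.IsThreeCycle) ∧ l.prod = u ∧ absLength u = 2 * l.length := by
  induction hn : absLength u using Nat.strong_induction_on generalizing u with
  | _ n ih =>
    by_cases h1 : u = 1
    · exact ⟨[], by simp, by simp [h1], by simp [← hn, h1, absLength_one]⟩
    obtain ⟨x, hx⟩ : ∃ x, u x ≠ x := not_forall.1 fun h => h1 (Equiv.ext h)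
    have hxb := (apply_apply_ne_of_odd_orderOf hu hx).symm
    have hab : u x ≠ u (u x) := fun e => hx (u.injective e.symm)
    set τ := threeCycle x (u x) (u (u x)) with hτ
    obtain ⟨hfix_x, hfix_a⟩ := (threeCycle_inv_mul_fixes_iff hx.symm hxb hab u).2 ⟨rfl, rfl⟩
    have hodd := odd_orderOf_threeCycle_mul_iff_of_fixed hx.symm hxb hab hfix_x hfix_a
    have hadd := absLength_threeCycle_add_of_fixed hx.symm hxb hab hfix_x hfix_a
    rw [← hτ, mul_inv_cancel_left] at hodd hadd
    rw [absLength_threeCycle hx.symm hxb hab] at hadd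
    obtain ⟨l, hl, hprod, hlen⟩ := ih (absLength (τ⁻¹ * u)) (by omega) _ (hodd.1 hu) rfl
    refine ⟨τ :: l, List.forall_mem_cons.2 ⟨isThreeCycle_threeCycle hx.symm hxb hab, hl⟩, ?_, ?_⟩
    · rw [List.prod_cons, hprod, mul_inv_cancel_left]
    · rw [List.length_cons]
      omega

theorem exists_list_isThreeCycle_of_sign_eq_one {u : Perm α} (hu : sign u = 1) :
    ∃ l : List (Perm α), (∀ t ∈ l, t.IsThreeCycle) ∧ l.prod = u := by
  rw [← mem_alternatingGroup, ← closure_three_cycles_eq_alternating, ← Subgroup.mem_toSubmonoid,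
    Subgroup.closure_toSubmonoid] at hu
  obtain ⟨l, hl, hprod⟩ := Submonoid.exists_list_of_mem_closure hu
  exact ⟨l, fun t ht => (hl t ht).elim id IsThreeCycle.inv_iff.1, hprod⟩

theorem exists_list_isThreeCycle_length_eq_lenT {u : Perm α} (hu : sign u = 1) :
    ∃ l : List (Perm α), (∀ t ∈ l, t.IsThreeCycle) ∧ l.prod = u ∧
      l.length = lenT {t : Perm α | t.IsThreeCycle} u := by
  obtain ⟨l, hl, rfl⟩ := exists_list_isThreeCycle_of_sign_eq_one hu
  exact exists_list_length_eq_lenT hl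

theorem lenT_isThreeCycle_eq_zero {u : Perm α} (hu : sign u ≠ 1) :
    lenT {t : Perm α | t.IsThreeCycle} u = 0 := by
  refine lenT_eq_zero_of_notMem_closure ?_
  rwa [closure_three_cycles_eq_alternating, mem_alternatingGroup]

theorem absLength_le_two_mul_lenT {u : Perm α} (hu : sign u = 1) :
    absLength u ≤ 2 * lenT {t : Perm α | t.IsThreeCycle} u := by
  obtain ⟨l, hl, rfl, hlen⟩ := exists_list_isThreeCycle_length_eq_lenT hu
  exact hlen ▸ absLength_prod_le hl

theorem odd_orderOf_of_absLength_eq_two_mul_lenT {u : Perm α} (hu : sign u = 1)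
    (h : absLength u = 2 * lenT {t : Perm α | t.IsThreeCycle} u) : Odd (orderOf u) := by
  obtain ⟨l, hl, rfl, hlen⟩ := exists_list_isThreeCycle_length_eq_lenT hu
  exact odd_orderOf_prod hl (hlen ▸ h)

theorem absLength_eq_two_mul_lenT {u : Perm α} (hu : Odd (orderOf u)) :
    absLength u = 2 * lenT {t : Perm α | t.IsThreeCycle} u := by
  obtain ⟨l, hl, rfl, hlen⟩ := exists_list_isThreeCycle_of_odd_orderOf u hu
  have := lenT_prod_le_length (T := {t : Perm α | t.IsThreeCycle}) hl
  have := absLength_le_two_mul_lenT (sign_of_odd_orderOf hu)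
  omega

theorem odd_orderOf_mul_of_absLength_add {α : Type*} [Finite α] {u v : Perm α}
    (hu : Odd (orderOf u)) (hv : Odd (orderOf v))
    (h : absLength u + absLength v = absLength (u * v)) :
    Odd (orderOf (u * v)) := by
  classical
  cases nonempty_fintype α
  obtain ⟨l, hl, rfl, hlen⟩ := exists_list_isThreeCycle_of_odd_orderOf u hu
  obtain ⟨l', hl', rfl, hlen'⟩ := exists_list_isThreeCycle_of_odd_orderOf v hv
  rw [← List.prod_append] at h ⊢
  refine odd_orderOf_prod (fun t ht => (List.mem_append.1 ht).elim (hl t) (hl' t)) ?_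
  rw [List.length_append]
  omega

end ThreeCycleLength

section AbsPrefix

variable {α : Type*}

/-- The absolute order on permutations: `u` begins a factorization of `w` along which absolute
lengths add up. -/
def AbsPrefix (u w : Perm α) : Prop :=
  absLength u + absLength (u⁻¹ * w) = absLength w

variable {u v w : Perm α}

theorem AbsPrefix.refl (u : Perm α) : AbsPrefix u u := by
  rw [AbsPrefix, inv_mul_cancel, absLength_one, add_zero]

theorem AbsPrefix.inv_mul (h : AbsPrefix u w) : AbsPrefix (u⁻¹ * w) w := by
  have hconj : (u⁻¹ * w)⁻¹ * w = w⁻¹ * u * w⁻¹⁻¹ := by group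
  rw [AbsPrefix, hconj, absLength_conj, add_comm]
  exact h

theorem fixedPoints_indicator_mem_invariants [DecidableEq α] (h : Commute v w) :
    (fun y => if v y = y then (1 : ℚ) else 0) ∈ invariants w := fun y => by
  have hy : v (w y) = w y ↔ v y = y := by
    rw [← Perm.mul_apply, h.eq, Perm.mul_apply, w.apply_eq_iff_eq]
  simp only [hy]

variable [Finite α]

theorem absLength_le_add_inv_mul (u w : Perm α) :
    absLength w ≤ absLength u + absLength (u⁻¹ * w) := by
  simpa only [mul_inv_cancel_left] using absLength_mul_le u (u⁻¹ * w)

theorem absPrefix_and_absPrefix_iff : AbsPrefix u w ∧ AbsPrefix v (u⁻¹ * w) ↔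
    absLength u + absLength v + absLength (v⁻¹ * (u⁻¹ * w)) = absLength w := by
  have := absLength_le_add_inv_mul u w
  have := absLength_le_add_inv_mul v (u⁻¹ * w)
  unfold AbsPrefix
  omega

theorem absPrefix_mul_iff (h : absLength u + absLength v = absLength (u * v)) :
    AbsPrefix (u * v) w ↔ AbsPrefix u w ∧ AbsPrefix v (u⁻¹ * w) := by
  rw [absPrefix_and_absPrefix_iff, h, AbsPrefix, mul_inv_rev, mul_assoc]

theorem absPrefix_hurwitz_iff : AbsPrefix (u * v * u⁻¹) w ∧ AbsPrefix u ((u * v * u⁻¹)⁻¹ * w) ↔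
    AbsPrefix u w ∧ AbsPrefix v (u⁻¹ * w) := by
  have hrest : u⁻¹ * ((u * v * u⁻¹)⁻¹ * w) = v⁻¹ * (u⁻¹ * w) := by group
  rw [absPrefix_and_absPrefix_iff, absPrefix_and_absPrefix_iff, absLength_conj, hrest,
    add_comm (absLength v)]

theorem AbsPrefix.trans (huv : AbsPrefix u v) (hvw : AbsPrefix v w) : AbsPrefix u w := by
  rw [← mul_inv_cancel_left u v] at hvw
  exact ((absPrefix_mul_iff (by rwa [mul_inv_cancel_left])).1 hvw).1

theorem AbsPrefix.invariants_le (h : AbsPrefix u w) : invariants w ≤ invariants u := by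
  have := invariants_mul_of_absLength_mul (u := u) (v := u⁻¹ * w) (by rwa [mul_inv_cancel_left])
  rw [mul_inv_cancel_left] at this
  exact this.trans_le inf_le_left

theorem AbsPrefix.apply_eq_self (h : AbsPrefix u w) {x : α} (hx : w x = x) : u x = x := by
  classical
  have hsingle := h.invariants_le (single_mem_invariants hx 1) x
  by_contra hne
  simp [hne] at hsingle

theorem AbsPrefix.apply_eq_self_iff_of_commute (h : AbsPrefix u w) (hv : Commute v w) (y : α) :
    v (u y) = u y ↔ v y = y := by
  classical
  have hy := h.invariants_le (fixedPoints_indicator_mem_invariants hv) y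
  by_cases hvy : v y = y <;> by_cases hvu : v (u y) = u y <;> simp [hvy, hvu] at hy ⊢

end AbsPrefix

section AbsPrefixDisjoint

variable {α : Type*} [Fintype α] [DecidableEq α] {u w u₁ u₂ w₁ w₂ : Perm α}

theorem AbsPrefix.support_subset (h : AbsPrefix u w) : u.support ⊆ w.support := fun x hx => by
  rw [mem_support] at hx ⊢
  exact fun hw => hx (h.apply_eq_self hw)

theorem support_inv_mul_subset (h : u.support ⊆ w.support) : (u⁻¹ * w).support ⊆ w.support :=
  (support_mul_le _ _).trans (Finset.union_subset (by rwa [support_inv]) le_rfl)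

theorem mul_inv_mul_mul_of_disjoint (h : Disjoint w₁ w₂) (h₁ : u₁.support ⊆ w₁.support)
    (h₂ : u₂.support ⊆ w₂.support) :
    (u₁ * u₂)⁻¹ * (w₁ * w₂) = (u₁⁻¹ * w₁) * (u₂⁻¹ * w₂) := by
  have hcomm : Commute u₂⁻¹ (u₁⁻¹ * w₁) :=
    (h.mono (support_inv_mul_subset h₁) h₂).commute.symm.inv_left
  calc (u₁ * u₂)⁻¹ * (w₁ * w₂) = (u₂⁻¹ * (u₁⁻¹ * w₁)) * w₂ := by group
    _ = (u₁⁻¹ * w₁) * (u₂⁻¹ * w₂) := by rw [hcomm.eq, mul_assoc]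

theorem absPrefix_mul_mul_iff_of_disjoint (h : Disjoint w₁ w₂) (h₁ : u₁.support ⊆ w₁.support)
    (h₂ : u₂.support ⊆ w₂.support) :
    AbsPrefix (u₁ * u₂) (w₁ * w₂) ↔ AbsPrefix u₁ w₁ ∧ AbsPrefix u₂ w₂ := by
  have hquot := h.mono (support_inv_mul_subset h₁) (support_inv_mul_subset h₂)
  unfold AbsPrefix
  rw [mul_inv_mul_mul_of_disjoint h h₁ h₂, ← absLength_mul_of_disjoint h,
    ← absLength_mul_of_disjoint (h.mono h₁ h₂), ← absLength_mul_of_disjoint hquot]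
  have := absLength_le_add_inv_mul u₁ w₁
  have := absLength_le_add_inv_mul u₂ w₂
  omega

theorem AbsPrefix.exists_eq_mul_of_disjoint (h : Disjoint w₁ w₂) (hu : AbsPrefix u (w₁ * w₂)) :
    ∃ u₁ u₂, u = u₁ * u₂ ∧ u₁.support ⊆ w₁.support ∧ u₂.support ⊆ w₂.support := by
  have hmap (y : α) : w₁ (u y) ≠ u y ↔ w₁ y ≠ y :=
    (hu.apply_eq_self_iff_of_commute ((Commute.refl w₁).mul_right h.commute) y).not
  let u₁ : Perm α := ofSubtype (u.subtypePerm (p := fun y => w₁ y ≠ y) hmap)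
  have hu₁ {y : α} (hy : w₁ y ≠ y) : u₁ y = u y :=
    ofSubtype_apply_of_mem (p := fun y => w₁ y ≠ y) _ hy
  have hfix {y : α} (hy : w₁ y = y) : u₁ y = y :=
    ofSubtype_apply_of_not_mem (p := fun y => w₁ y ≠ y) _ (not_not.2 hy)
  refine ⟨u₁, u₁⁻¹ * u, (mul_inv_cancel_left _ _).symm, fun y hy => ?_, fun y hy => ?_⟩
  · rw [mem_support] at hy ⊢
    exact fun hw => hy (hfix hw)
  · rw [mem_support, Perm.mul_apply, Ne, inv_eq_iff_eq] at hy
    rw [mem_support]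
    intro hw₂
    by_cases hw₁ : w₁ y = y
    · refine hy ?_
      rw [hfix hw₁, hu.apply_eq_self (by rw [Perm.mul_apply, hw₂, hw₁])]
    · exact hy (hu₁ hw₁).symm

end AbsPrefixDisjoint

section OddPrefix

variable {α : Type*}

/-- The order induced on permutations of odd order by the 3-cycles: an absolute-length additive
factorization `w = u * (u⁻¹ * w)` into factors of odd order. -/
structure OddPrefix (u w : Perm α) : Prop where
  absPrefix : AbsPrefix u w
  odd_orderOf : Odd (orderOf u)
  odd_orderOf_inv_mul : Odd (orderOf (u⁻¹ * w))

theorem OddPrefix.refl {u : Perm α} (h : Odd (orderOf u)) : OddPrefix u u :=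
  ⟨AbsPrefix.refl u, h, by simp⟩

theorem OddPrefix.inv_mul {u w : Perm α} (h : OddPrefix u w) : OddPrefix (u⁻¹ * w) w := by
  have hconj : (u⁻¹ * w)⁻¹ * w = w⁻¹ * u * w⁻¹⁻¹ := by group
  refine ⟨h.absPrefix.inv_mul, h.odd_orderOf_inv_mul, ?_⟩
  rw [hconj, odd_orderOf_conj]
  exact h.odd_orderOf

theorem OddPrefix.trans [Finite α] {u v w : Perm α} (huv : OddPrefix u v) (hvw : OddPrefix v w) :
    OddPrefix u w := by
  have hmul : (u⁻¹ * v) * (v⁻¹ * w) = u⁻¹ * w := by group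
  have huw := huv.absPrefix.trans hvw.absPrefix
  refine ⟨huw, huv.odd_orderOf, ?_⟩
  rw [← hmul]
  refine odd_orderOf_mul_of_absLength_add huv.odd_orderOf_inv_mul hvw.odd_orderOf_inv_mul ?_
  rw [hmul]
  have := huv.absPrefix
  have := hvw.absPrefix
  unfold AbsPrefix at *
  omega

variable [Fintype α] [DecidableEq α] {u w : Perm α}

theorem oddPrefix_of_leT (hw : Odd (orderOf w)) (hu : sign u = 1)
    (h : leT {t : Perm α | t.IsThreeCycle} u w) : OddPrefix u w := by
  have hsign : sign (u⁻¹ * w) = 1 := by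
    rw [Perm.sign_mul, sign_inv, hu, sign_of_odd_orderOf hw, one_mul]
  have := absLength_eq_two_mul_lenT hw
  have := absLength_le_two_mul_lenT hu
  have := absLength_le_two_mul_lenT hsign
  have := absLength_le_add_inv_mul u w
  unfold leT at h
  exact ⟨by unfold AbsPrefix; omega, odd_orderOf_of_absLength_eq_two_mul_lenT hu (by omega),
    odd_orderOf_of_absLength_eq_two_mul_lenT hsign (by omega)⟩

theorem eq_one_of_leT_of_sign_ne_one (hw : Odd (orderOf w)) (hu : sign u ≠ 1)
    (h : leT {t : Perm α | t.IsThreeCycle} u w) : w = 1 := by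
  have hsign : sign (u⁻¹ * w) ≠ 1 := by
    rwa [Perm.sign_mul, sign_inv, sign_of_odd_orderOf hw, mul_one]
  refine eq_one_of_absLength_eq_zero ?_
  rw [absLength_eq_two_mul_lenT hw, h, lenT_isThreeCycle_eq_zero hu,
    lenT_isThreeCycle_eq_zero hsign]

theorem OddPrefix.leT (hw : Odd (orderOf w)) (h : OddPrefix u w) :
    leT {t : Perm α | t.IsThreeCycle} u w := by
  have := absLength_eq_two_mul_lenT hw
  have := absLength_eq_two_mul_lenT h.odd_orderOf
  have := absLength_eq_two_mul_lenT h.odd_orderOf_inv_mul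
  have := h.absPrefix
  unfold AbsPrefix at this
  unfold _root_.leT
  omega

/-- The side condition excludes odd permutations `u` below `1`, which satisfy `leT` because
`lenT` vanishes off the alternating group. -/
theorem leT_iff_oddPrefix (hw : Odd (orderOf w)) (h : sign u = 1 ∨ w ≠ 1) :
    leT {t : Perm α | t.IsThreeCycle} u w ↔ OddPrefix u w := by
  refine ⟨fun hle => ?_, OddPrefix.leT hw⟩
  by_cases hu : sign u = 1
  · exact oddPrefix_of_leT hw hu hle
  · exact absurd (eq_one_of_leT_of_sign_ne_one hw hu hle) (h.resolve_left hu)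

end OddPrefix

section FactorizationCount

variable {α : Type*} [Fintype α] [DecidableEq α]

open Classical in
/-- The possible first factors of an additive factorization of `w` into permutations of odd order,
if this factor is required to fix `A` pointwise. -/
noncomputable def oddFactors (A : Finset α) (w : Perm α) : Finset (Perm α) :=
  {u | Odd (orderOf u) ∧ (∀ y ∈ A, u y = y) ∧ AbsPrefix u w}

/-- The number of additive factorizations of `w` into permutations of odd order, one for each
entry of the list; the entry is a set of points which the factor is required to fix. -/
noncomputable def factorizationCount : List (Finset α) → Perm α → ℕ
  | [], w => if w = 1 then 1 else 0
  | A :: L, w => ∑ u ∈ oddFactors A w, factorizationCount L (u⁻¹ * w)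

variable {A : Finset α} {L : List (Finset α)} {u w : Perm α} {x : α}

theorem mem_oddFactors :
    u ∈ oddFactors A w ↔ Odd (orderOf u) ∧ (∀ y ∈ A, u y = y) ∧ AbsPrefix u w := by
  simp [oddFactors]

theorem factorizationCount_cons (A : Finset α) (L : List (Finset α)) (w : Perm α) :
    factorizationCount (A :: L) w = ∑ u ∈ oddFactors A w, factorizationCount L (u⁻¹ * w) :=
  rfl

theorem odd_orderOf_of_factorizationCount_ne_zero (h : factorizationCount L w ≠ 0) :
    Odd (orderOf w) := by
  induction L generalizing w with
  | nil =>
    have hw : w = 1 := by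
      by_contra hne
      exact h (if_neg hne)
    simp [hw]
  | cons A L ih =>
    obtain ⟨u, hu, hcount⟩ := Finset.exists_ne_zero_of_sum_ne_zero h
    obtain ⟨hodd, -, hprefix⟩ := mem_oddFactors.1 hu
    rw [← mul_inv_cancel_left u w]
    exact odd_orderOf_mul_of_absLength_add hodd (ih hcount) (by rwa [mul_inv_cancel_left])

theorem oddFactors_one (A : Finset α) : oddFactors A 1 = {1} := by
  ext u
  rw [mem_oddFactors, Finset.mem_singleton]
  refine ⟨fun ⟨_, _, hu⟩ => Equiv.ext fun y => hu.apply_eq_self rfl, ?_⟩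
  rintro rfl
  exact ⟨by simp, fun _ _ => rfl, AbsPrefix.refl 1⟩

theorem factorizationCount_one (L : List (Finset α)) : factorizationCount L 1 = 1 := by
  induction L with
  | nil => exact if_pos rfl
  | cons A L ih => rw [factorizationCount_cons, oddFactors_one, Finset.sum_singleton,
      inv_one, one_mul, ih]

theorem factorizationCount_eq_zero (hw : w x ≠ x) (hL : ∀ A ∈ L, x ∈ A) :
    factorizationCount L w = 0 := by
  induction L generalizing w with
  | nil => exact if_neg fun h => hw (by rw [h, Perm.one_apply])
  | cons A L ih =>
    rw [List.forall_mem_cons] at hL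
    refine Finset.sum_eq_zero fun u hu => ih ?_ hL.2
    rwa [Perm.mul_apply, Ne, inv_eq_iff_eq, (mem_oddFactors.1 hu).2.1 x hL.1]

theorem oddFactors_eq_empty_constraint (hA : ∀ y ∈ A, w y = y) :
    oddFactors A w = oddFactors ∅ w := by
  ext u
  simp only [mem_oddFactors, Finset.notMem_empty, false_imp_iff, implies_true, true_and]
  exact and_congr_right fun _ => and_iff_right_of_imp fun hu y hy => hu.apply_eq_self (hA y hy)

end FactorizationCount

section Disjoint

variable {α : Type*} [Fintype α] [DecidableEq α] {A : Finset α} {u₁ u₂ v₁ v₂ w₁ w₂ : Perm α}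

theorem mul_mem_oddFactors_iff (h : Disjoint w₁ w₂) (h₁ : u₁.support ⊆ w₁.support)
    (h₂ : u₂.support ⊆ w₂.support) :
    u₁ * u₂ ∈ oddFactors A (w₁ * w₂) ↔ u₁ ∈ oddFactors A w₁ ∧ u₂ ∈ oddFactors A w₂ := by
  have hu := h.mono h₁ h₂
  simp only [mem_oddFactors, odd_orderOf_mul_of_disjoint hu, hu.mul_apply_eq_iff, forall₂_and,
    absPrefix_mul_mul_iff_of_disjoint h h₁ h₂]
  tauto

theorem eq_of_mul_eq_mul_of_disjoint (h : Disjoint w₁ w₂) (hu₁ : u₁.support ⊆ w₁.support)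
    (hu₂ : u₂.support ⊆ w₂.support) (hv₁ : v₁.support ⊆ w₁.support)
    (hv₂ : v₂.support ⊆ w₂.support) (he : u₁ * u₂ = v₁ * v₂) : u₁ = v₁ ∧ u₂ = v₂ := by
  have hquot : v₁⁻¹ * u₁ = v₂ * u₂⁻¹ := by
    rw [inv_mul_eq_iff_eq_mul, ← mul_assoc, ← he, mul_inv_cancel_right]
  have hdisj : Disjoint (v₁⁻¹ * u₁) (v₂ * u₂⁻¹) :=
    ((h.mono hv₁ hv₂).inv_left.mul_right (h.mono hv₁ hu₂).inv_left.inv_right).mul_left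
      ((h.mono hu₁ hv₂).mul_right (h.mono hu₁ hu₂).inv_right)
  rw [← hquot, disjoint_refl_iff, inv_mul_eq_one] at hdisj
  exact ⟨hdisj.symm, mul_left_cancel (hdisj ▸ he)⟩

theorem factorizationCount_mul_of_disjoint (L : List (Finset α)) (h : Disjoint w₁ w₂) :
    factorizationCount L (w₁ * w₂) = factorizationCount L w₁ * factorizationCount L w₂ := by
  induction L generalizing w₁ w₂ with
  | nil => simp only [factorizationCount, h.mul_eq_one_iff, ite_and, ite_mul, one_mul, zero_mul]
  | cons A L ih =>
    have hsub {u w : Perm α} (hu : u ∈ oddFactors A w) : u.support ⊆ w.support :=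
      (mem_oddFactors.1 hu).2.2.support_subset
    simp only [factorizationCount_cons, Finset.sum_mul_sum, ← Finset.sum_product']
    symm
    refine Finset.sum_bij (fun p _ => p.1 * p.2) ?_ ?_ ?_ ?_ <;>
      simp only [Prod.forall, Finset.mem_product]
    · rintro u₁ u₂ ⟨hu₁, hu₂⟩
      exact (mul_mem_oddFactors_iff h (hsub hu₁) (hsub hu₂)).2 ⟨hu₁, hu₂⟩
    · rintro u₁ u₂ ⟨hu₁, hu₂⟩ v₁ v₂ ⟨hv₁, hv₂⟩ he
      exact Prod.ext_iff.2 (eq_of_mul_eq_mul_of_disjoint h (hsub hu₁) (hsub hu₂) (hsub hv₁)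
        (hsub hv₂) he)
    · intro u hu
      obtain ⟨u₁, u₂, rfl, h₁, h₂⟩ := (mem_oddFactors.1 hu).2.2.exists_eq_mul_of_disjoint h
      exact ⟨(u₁, u₂), (mul_mem_oddFactors_iff h h₁ h₂).1 hu, rfl⟩
    · rintro u₁ u₂ ⟨hu₁, hu₂⟩
      rw [mul_inv_mul_mul_of_disjoint h (hsub hu₁) (hsub hu₂),
        ih (h.mono (support_inv_mul_subset (hsub hu₁)) (support_inv_mul_subset (hsub hu₂)))]

end Disjoint

section Permute

variable {α : Type*} [Fintype α] [DecidableEq α] {A A' : Finset α} {u v w : Perm α} {x : α}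

theorem hurwitz_mem_oddFactors_iff (hA : ∀ y ∈ A', w y ≠ y → y ∈ A) :
    u * v * u⁻¹ ∈ oddFactors A' w ∧ u ∈ oddFactors A ((u * v * u⁻¹)⁻¹ * w) ↔
      u ∈ oddFactors A w ∧ v ∈ oddFactors A' (u⁻¹ * w) := by
  have hfix (hu : ∀ y ∈ A, u y = y) (hp : AbsPrefix u w) :
      (∀ y ∈ A', (u * v * u⁻¹) y = y) ↔ ∀ y ∈ A', v y = y := forall₂_congr fun y hy => by
    have huy : u y = y := by
      by_cases hwy : w y = y
      · exact hp.apply_eq_self hwy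
      · exact hu y (hA y hy hwy)
    rw [Perm.mul_apply, Perm.mul_apply, inv_eq_iff_eq.2 huy.symm]
    exact ⟨fun h => u.injective (h.trans huy.symm), fun h => by rw [h, huy]⟩
  simp only [mem_oddFactors, odd_orderOf_conj]
  constructor
  · rintro ⟨⟨hv, hvA, hpv⟩, hu, huA, hpu⟩
    obtain ⟨hpu, hpv⟩ := absPrefix_hurwitz_iff.1 ⟨hpv, hpu⟩
    exact ⟨⟨hu, huA, hpu⟩, hv, (hfix huA hpu).1 hvA, hpv⟩
  · rintro ⟨⟨hu, huA, hpu⟩, hv, hvA, hpv⟩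
    have hvA := (hfix huA hpu).2 hvA
    obtain ⟨hpv, hpu⟩ := absPrefix_hurwitz_iff.2 ⟨hpu, hpv⟩
    exact ⟨⟨hv, hvA, hpv⟩, hu, huA, hpu⟩

theorem factorizationCount_swap (hA : ∀ y ∈ A', w y ≠ y → y ∈ A) (L : List (Finset α)) :
    factorizationCount (A :: A' :: L) w = factorizationCount (A' :: A :: L) w := by
  simp only [factorizationCount_cons, Finset.sum_sigma']
  refine Finset.sum_bij' (fun p _ => ⟨p.1 * p.2 * p.1⁻¹, p.1⟩)
    (fun p _ => ⟨p.2, p.2⁻¹ * p.1 * p.2⟩) ?_ ?_ ?_ ?_ ?_ <;>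
    simp only [Sigma.forall, Finset.mem_sigma]
  · exact fun u v h => (hurwitz_mem_oddFactors_iff hA).2 h
  · intro p r h
    have hp : r * (r⁻¹ * p * r) * r⁻¹ = p := by group
    exact (hurwitz_mem_oddFactors_iff hA).1 (by rwa [hp])
  · intro u v _
    rw [Sigma.mk.injEq, heq_eq_eq]
    exact ⟨rfl, by group⟩
  · intro p r _
    rw [Sigma.mk.injEq, heq_eq_eq]
    exact ⟨by group, rfl⟩
  · intro u v _
    congr 1
    group

theorem factorizationCount_perm {L L' : List (Finset α)} (h : L.Perm L')
    (hL : ∀ A ∈ L, ∀ y ∈ A, w y ≠ y → y = x) :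
    factorizationCount L w = factorizationCount L' w := by
  induction h generalizing w with
  | nil => rfl
  | cons A _ ih =>
    rw [List.forall_mem_cons] at hL
    refine Finset.sum_congr rfl fun u hu => ih fun A hA y hy hne => hL.2 A hA y hy ?_
    exact fun hw => hne ((mem_oddFactors.1 hu).2.2.inv_mul.apply_eq_self hw)
  | swap A A' L =>
    simp only [List.forall_mem_cons] at hL
    obtain ⟨hA', hA, -⟩ := hL
    by_cases hx : x ∈ A
    · exact (factorizationCount_swap (fun y hy hne => hA' y hy hne ▸ hx) L).symm
    · exact factorizationCount_swap (fun y hy hne => absurd (hA y hy hne ▸ hy) hx) L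
  | trans h _ ih₁ ih₂ =>
    rw [ih₁ hL, ih₂ fun A hA => hL A (h.mem_iff.2 hA)]

end Permute

section Peel

variable {α : Type*} [Fintype α] [DecidableEq α] {u v w : Perm α} {x a b : α}

open Classical in
/-- The pairs `(a, b)` for which `x ↦ a ↦ b ↦ x` is a 3-cycle below `w` in the absolute order. -/
noncomputable def threeCyclePairs (x : α) (w : Perm α) : Finset (α × α) :=
  {p | x ≠ p.1 ∧ x ≠ p.2 ∧ p.1 ≠ p.2 ∧ AbsPrefix (threeCycle x p.1 p.2) w}

theorem mem_threeCyclePairs : (a, b) ∈ threeCyclePairs x w ↔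
    x ≠ a ∧ x ≠ b ∧ a ≠ b ∧ AbsPrefix (threeCycle x a b) w := by
  simp [threeCyclePairs]

theorem mem_oddFactors_empty_iff_threeCycle_inv_mul (hxa : x ≠ a) (hxb : x ≠ b) (hab : a ≠ b)
    (hxu : u x = a) (hau : u a = b) :
    u ∈ oddFactors ∅ w ↔ AbsPrefix (threeCycle x a b) w ∧
      (threeCycle x a b)⁻¹ * u ∈ oddFactors {x, a} ((threeCycle x a b)⁻¹ * w) := by
  obtain ⟨hx, ha⟩ := (threeCycle_inv_mul_fixes_iff hxa hxb hab u).2 ⟨hxu, hau⟩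
  have hadd := absLength_threeCycle_add_of_fixed hxa hxb hab hx ha
  have hodd := odd_orderOf_threeCycle_mul_iff_of_fixed hxa hxb hab hx ha
  have hprefix := absPrefix_mul_iff (w := w) hadd
  rw [mul_inv_cancel_left] at hodd hprefix
  simp only [mem_oddFactors, hodd, hprefix, Finset.mem_insert, Finset.mem_singleton,
    forall_eq_or_imp, forall_eq, hx, ha, Finset.notMem_empty, false_imp_iff, implies_true]
  tauto

theorem apply_pair_mem_threeCyclePairs (hu : u ∈ oddFactors ∅ w) (hx : u x ≠ x) :
    (u x, u (u x)) ∈ threeCyclePairs x w := by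
  have hxa : x ≠ u x := hx.symm
  have hxb : x ≠ u (u x) := (apply_apply_ne_of_odd_orderOf (mem_oddFactors.1 hu).1 hx).symm
  have hab : u x ≠ u (u x) := u.injective.ne hxa
  exact mem_threeCyclePairs.2 ⟨hxa, hxb, hab,
    ((mem_oddFactors_empty_iff_threeCycle_inv_mul hxa hxb hab rfl rfl).1 hu).1⟩

theorem sum_oddFactors_fiber (hp : (a, b) ∈ threeCyclePairs x w) (f : Perm α → ℕ) :
    ∑ u ∈ oddFactors ∅ w with u x ≠ x ∧ (u x, u (u x)) = (a, b), f u =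
      ∑ v ∈ oddFactors {x, a} ((threeCycle x a b)⁻¹ * w), f (threeCycle x a b * v) := by
  obtain ⟨hxa, hxb, hab, hprefix⟩ := mem_threeCyclePairs.1 hp
  refine Finset.sum_bij' (fun u _ => (threeCycle x a b)⁻¹ * u) (fun v _ => threeCycle x a b * v)
    (fun u hu => ?_) (fun v hv => ?_) (fun u _ => mul_inv_cancel_left _ _)
    (fun v _ => inv_mul_cancel_left _ _) (fun u _ => by rw [mul_inv_cancel_left])
  · obtain ⟨hfactor, -, hpair⟩ := Finset.mem_filter.1 hu
    obtain ⟨hx, ha⟩ : u x = a ∧ u (u x) = b := Prod.ext_iff.1 hpair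
    exact ((mem_oddFactors_empty_iff_threeCycle_inv_mul hxa hxb hab hx (hx ▸ ha)).1 hfactor).2
  · have hfix := (mem_oddFactors.1 hv).2.1
    obtain ⟨hx, ha⟩ := (threeCycle_inv_mul_fixes_iff hxa hxb hab (threeCycle x a b * v)).1
      (by simpa only [inv_mul_cancel_left] using ⟨hfix x (by simp), hfix a (by simp)⟩)
    refine Finset.mem_filter.2 ⟨?_, by rw [hx]; exact hxa.symm, by rw [hx, ha]⟩
    rw [mem_oddFactors_empty_iff_threeCycle_inv_mul hxa hxb hab hx ha, inv_mul_cancel_left]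
    exact ⟨hprefix, hv⟩

theorem oddFactors_singleton (x : α) (w : Perm α) :
    oddFactors {x} w = {u ∈ oddFactors ∅ w | u x = x} := by
  ext u
  simp only [Finset.mem_filter, mem_oddFactors, Finset.mem_singleton, forall_eq,
    Finset.notMem_empty, false_imp_iff, implies_true]
  tauto

/-- A factor of odd order moving `x` maps `x ↦ a ↦ b` with `b ≠ x`, so the 3-cycle on `x, a, b` can
be split off from it. -/
theorem factorizationCount_cons_empty (x : α) (w : Perm α) (L : List (Finset α)) :
    factorizationCount (∅ :: L) w = factorizationCount ({x} :: L) w +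
      ∑ p ∈ threeCyclePairs x w,
        factorizationCount ({x, p.1} :: L) ((threeCycle x p.1 p.2)⁻¹ * w) := by
  rw [factorizationCount_cons, ← Finset.sum_filter_add_sum_filter_not _ (fun u => u x = x),
    ← oddFactors_singleton, ← factorizationCount_cons]
  congr 1
  rw [← Finset.sum_fiberwise_of_maps_to (g := fun u => (u x, u (u x))) (t := threeCyclePairs x w)
    fun u hu =>
      apply_pair_mem_threeCyclePairs (Finset.mem_filter.1 hu).1 (Finset.mem_filter.1 hu).2]
  refine Finset.sum_congr rfl fun p hp => ?_
  rw [Finset.filter_filter, sum_oddFactors_fiber hp, factorizationCount_cons]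
  exact Finset.sum_congr rfl fun v _ => by rw [mul_inv_rev, mul_assoc]

end Peel

section Cycle

variable {α : Type*} [DecidableEq α] {x a b : α} {l₁ l₂ l₃ : List α}

theorem nodup_append_cons_swap {β : Type*} {l₁ l₂ l₃ : List β} {a b : β}
    (h : (l₁ ++ a :: (l₂ ++ b :: l₃)).Nodup) : (l₁ ++ b :: (l₃ ++ a :: l₂)).Nodup := by
  simp only [← List.cons_append] at h ⊢
  exact (List.perm_append_comm.append_left l₁).nodup_iff.1 h

theorem threeCycle_inv_mul_formPerm (h : (x :: (l₁ ++ a :: (l₂ ++ b :: l₃))).Nodup) :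
    (threeCycle x b a)⁻¹ * (x :: (l₁ ++ a :: (l₂ ++ b :: l₃))).formPerm =
      (x :: (l₁ ++ b :: (l₃ ++ a :: l₂))).formPerm := by
  have hswap := nodup_append_cons_swap (l₁ := x :: l₁) h
  have hdisj : Disjoint (a :: l₂).formPerm (b :: l₃).formPerm :=
    disjoint_formPerm_formPerm (by grind [List.Disjoint])
  rw [inv_mul_eq_iff_eq_mul, formPerm_eq_threeCycle_mul h,
    formPerm_eq_threeCycle_mul hswap, ← hdisj.commute.eq,
    threeCycle_eq_sq (a := b) (b := a) (by grind) (by grind) (by grind), mul_assoc]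

theorem absPrefix_threeCycle_formPerm [Finite α]
    (h : (x :: (l₁ ++ a :: (l₂ ++ b :: l₃))).Nodup) :
    AbsPrefix (threeCycle x a b) (x :: (l₁ ++ a :: (l₂ ++ b :: l₃))).formPerm := by
  have hr : ∀ y ∈ x :: (l₁ ++ a :: (l₂ ++ b :: l₃)), (1 : Perm α) y = y := fun _ _ => rfl
  have hsplit := absLength_formPerm_mul_formPerm_mul_formPerm_mul h hr
  rw [mul_one, absLength_one] at hsplit
  rw [AbsPrefix, absLength_formPerm_cons _ _ h, formPerm_eq_threeCycle_mul h, inv_mul_cancel_left,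
    hsplit, absLength_threeCycle (by grind) (by grind) (by grind)]
  simp only [List.length_append, List.length_cons]
  omega

theorem not_absPrefix_threeCycle_formPerm [Finite α]
    (h : (x :: (l₁ ++ a :: (l₂ ++ b :: l₃))).Nodup) :
    ¬ AbsPrefix (threeCycle x b a) (x :: (l₁ ++ a :: (l₂ ++ b :: l₃))).formPerm := by
  have hswap : (x :: (l₁ ++ b :: (l₃ ++ a :: l₂))).Nodup :=
    nodup_append_cons_swap (l₁ := x :: l₁) h
  rw [AbsPrefix, threeCycle_inv_mul_formPerm h, absLength_formPerm_cons _ _ h,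
    absLength_formPerm_cons _ _ hswap,
    absLength_threeCycle (by grind) (by grind) (by grind)]
  simp only [List.length_append, List.length_cons]
  omega

variable [Fintype α]

theorem factorizationCount_threeCycle_inv_mul_formPerm
    (h : (x :: (l₁ ++ a :: (l₂ ++ b :: l₃))).Nodup) (L : List (Finset α)) :
    factorizationCount L
        ((threeCycle x a b)⁻¹ * (x :: (l₁ ++ a :: (l₂ ++ b :: l₃))).formPerm) =
      factorizationCount L (x :: l₁).formPerm * factorizationCount L (a :: l₂).formPerm *
        factorizationCount L (b :: l₃).formPerm := by
  have h₁₂ : Disjoint (x :: l₁).formPerm (a :: l₂).formPerm :=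
    disjoint_formPerm_formPerm (by grind [List.Disjoint])
  have h₁₃ : Disjoint (x :: l₁).formPerm (b :: l₃).formPerm :=
    disjoint_formPerm_formPerm (by grind [List.Disjoint])
  have h₂₃ : Disjoint (a :: l₂).formPerm (b :: l₃).formPerm :=
    disjoint_formPerm_formPerm (by grind [List.Disjoint])
  rw [formPerm_eq_threeCycle_mul h, inv_mul_cancel_left,
    factorizationCount_mul_of_disjoint L (h₁₂.mul_right h₁₃),
    factorizationCount_mul_of_disjoint L h₂₃, mul_assoc]

theorem exists_eq_append_cons_append_cons {β : Type*} {t : List β} {i j : ℕ} (hij : i < j)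
    (hj : j < t.length) (d : β) : ∃ l₁ l₂ l₃ : List β,
      t = l₁ ++ t.getD i d :: (l₂ ++ t.getD j d :: l₃) ∧
        l₁.length = i ∧ i + l₂.length + 1 = j ∧ j + l₃.length + 1 = t.length := by
  have hdrop {k : ℕ} (hk : k < t.length) : t.drop k = t.getD k d :: t.drop (k + 1) := by
    rw [List.getD_eq_getElem _ _ hk, List.drop_eq_getElem_cons hk]
  have hmiddle : t.drop (i + 1) = (t.drop (i + 1)).take (j - i - 1) ++ t.drop j := by
    conv_lhs => rw [← List.take_append_drop (j - i - 1) (t.drop (i + 1)), List.drop_drop]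
    congr 2
    omega
  refine ⟨t.take i, (t.drop (i + 1)).take (j - i - 1), t.drop (j + 1), ?_, ?_, ?_, ?_⟩
  · rw [← hdrop hj, ← hmiddle, ← hdrop (hij.trans hj), List.take_append_drop]
  all_goals
    simp only [List.length_take, List.length_drop]
    omega

variable {t : List α}

theorem getD_pair_mem_threeCyclePairs (h : (x :: t).Nodup) {i j : ℕ} (hij : i < j)
    (hj : j < t.length) :
    (t.getD i x, t.getD j x) ∈ threeCyclePairs x (x :: t).formPerm := by
  obtain ⟨l₁, l₂, l₃, ht, -⟩ := exists_eq_append_cons_append_cons hij hj x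
  generalize t.getD i x = a at *
  generalize t.getD j x = b at *
  subst ht
  exact mem_threeCyclePairs.2 ⟨by grind, by grind, by grind, absPrefix_threeCycle_formPerm h⟩

theorem mem_of_mem_threeCyclePairs (hp : (a, b) ∈ threeCyclePairs x (x :: t).formPerm) :
    a ∈ t ∧ b ∈ t := by
  obtain ⟨hxa, hxb, hab, hprefix⟩ := mem_threeCyclePairs.1 hp
  have hmem {y : α} (hy : threeCycle x a b y ≠ y) : y ∈ x :: t :=
    List.mem_of_formPerm_apply_ne fun h => hy (hprefix.apply_eq_self h)
  have ha := hmem (y := a) (by rw [threeCycle_apply_middle hxb hab]; exact hab.symm)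
  have hb := hmem (y := b) (by rw [threeCycle_apply_right]; exact hxb)
  grind

theorem idxOf_lt_idxOf_of_mem_threeCyclePairs (h : (x :: t).Nodup)
    (hp : (a, b) ∈ threeCyclePairs x (x :: t).formPerm) : t.idxOf a < t.idxOf b := by
  obtain ⟨ha, hb⟩ := mem_of_mem_threeCyclePairs hp
  obtain ⟨-, -, hab, hprefix⟩ := mem_threeCyclePairs.1 hp
  by_contra hle
  have hne : t.idxOf b ≠ t.idxOf a := fun he => hab ((List.idxOf_inj hb).1 he).symm
  obtain ⟨l₁, l₂, l₃, ht, -⟩ := exists_eq_append_cons_append_cons (by omega : t.idxOf b < t.idxOf a)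
    (List.idxOf_lt_length_of_mem ha) x
  rw [List.getD_eq_getElem _ _ (List.idxOf_lt_length_of_mem hb),
    List.getD_eq_getElem _ _ (List.idxOf_lt_length_of_mem ha), List.getElem_idxOf,
    List.getElem_idxOf] at ht
  rw [ht] at h hprefix
  exact not_absPrefix_threeCycle_formPerm h hprefix

theorem sum_threeCyclePairs_formPerm (h : (x :: t).Nodup) (f : α × α → ℕ) :
    ∑ p ∈ threeCyclePairs x (x :: t).formPerm, f p =
      ∑ j ∈ Finset.range t.length, ∑ i ∈ Finset.range j, f (t.getD i x, t.getD j x) := by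
  have hgetD {a : α} (ha : a ∈ t) : t.getD (t.idxOf a) x = a := by
    rw [List.getD_eq_getElem _ _ (List.idxOf_lt_length_of_mem ha), List.getElem_idxOf]
  have hidxOf {i : ℕ} (hi : i < t.length) : t.idxOf (t.getD i x) = i := by
    rw [List.getD_eq_getElem _ _ hi, h.of_cons.idxOf_getElem]
  rw [Finset.sum_sigma']
  refine Finset.sum_bij' (fun p _ => ⟨t.idxOf p.2, t.idxOf p.1⟩)
    (fun q _ => (t.getD q.2 x, t.getD q.1 x)) ?_ ?_ ?_ ?_ ?_ <;>
    simp only [Prod.forall, Sigma.forall, Finset.mem_sigma, Finset.mem_range]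
  · exact fun a b hp => ⟨List.idxOf_lt_length_of_mem (mem_of_mem_threeCyclePairs hp).2,
      idxOf_lt_idxOf_of_mem_threeCyclePairs h hp⟩
  · exact fun j i ⟨hj, hij⟩ => getD_pair_mem_threeCyclePairs h hij hj
  · intro a b hp
    obtain ⟨ha, hb⟩ := mem_of_mem_threeCyclePairs hp
    rw [hgetD ha, hgetD hb]
  · rintro j i ⟨hj, hij⟩
    rw [hidxOf hj, hidxOf (hij.trans hj)]
  · intro a b hp
    obtain ⟨ha, hb⟩ := mem_of_mem_threeCyclePairs hp
    rw [hgetD ha, hgetD hb]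

end Cycle

section Raney

open PowerSeries

/-- The Raney numbers: `raney p r n` is the coefficient of `X ^ n` in `B ^ r`, where `B` is the
generalized binomial series determined by `B = 1 + X * B ^ p`. -/
def raney (p : ℕ) : ℕ → ℕ → ℕ
  | _, 0 => 1
  | 0, _ + 1 => 0
  | r + 1, n + 1 => raney p r (n + 1) + raney p (r + p) n
termination_by r n => (n, r)

/-- The generating function `∑ n, raney p r n * X ^ (2 * n)`, in the square of the variable because
absolute lengths of permutations of odd order are even. -/
noncomputable def raneySeries (p r : ℕ) : ℕ⟦X⟧ :=
  PowerSeries.mk fun n => if Even n then raney p r (n / 2) else 0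

theorem coeff_two_mul_raneySeries (p r n : ℕ) :
    coeff (2 * n) (raneySeries p r) = raney p r n := by
  simp [raneySeries]

theorem raneySeries_zero (p : ℕ) : raneySeries p 0 = 1 := by
  ext n
  match n with
  | 0 => simp [raneySeries, raney]
  | 1 => simp [raneySeries, coeff_one]
  | n + 2 => simp [raneySeries, raney, coeff_one]

theorem raneySeries_succ (p r : ℕ) :
    raneySeries p (r + 1) = raneySeries p r + X ^ 2 * raneySeries p (r + p) := by
  ext n
  rw [map_add, coeff_X_pow_mul']
  match n with
  | 0 => simp [raneySeries, raney]
  | 1 => simp [raneySeries]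
  | n + 2 =>
    by_cases hn : Even n <;> simp [raneySeries, raney, hn, Nat.even_add]

theorem raneySeries_add (p r s : ℕ) :
    raneySeries p (r + s) = raneySeries p r * raneySeries p s := by
  ext n
  induction n using Nat.strong_induction_on generalizing r with
  | _ n ihn =>
    induction r with
    | zero => rw [raneySeries_zero, zero_add, one_mul]
    | succ r ihr =>
      rw [add_right_comm, raneySeries_succ, raneySeries_succ p r, add_mul, mul_assoc, map_add,
        map_add, ihr, coeff_X_pow_mul', coeff_X_pow_mul', add_right_comm]
      split_ifs with hn
      · rw [ihn (n - 2) (by omega)]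
      · rfl

theorem raneySeries_two_mul_add_one_succ (m r : ℕ) :
    raneySeries (2 * m + 1) (r + 1) = raneySeries (2 * m + 1) r +
      X * ((X * (raneySeries (2 * m + 1) r * raneySeries (2 * m + 1) m)) *
        raneySeries (2 * m + 1) (m + 1)) := by
  rw [raneySeries_succ, show r + (2 * m + 1) = r + m + (m + 1) by ring,
    raneySeries_add _ (r + m), raneySeries_add _ r]
  ring

theorem raney_mul_eq_mul_choose {p : ℕ} (hp : 0 < p) (r n : ℕ) :
    (n * p + r) * raney p r n = r * (n * p + r).choose n := by
  induction n generalizing r with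
  | zero => simp [raney]
  | succ n ihn =>
    induction r with
    | zero => simp [raney]
    | succ r ihr =>
      have hprev := ihn (r + p)
      have harg : n * p + (r + p) = (n + 1) * p + r := by ring
      rw [harg] at hprev
      have hpos : 0 < (n + 1) * p + r := by positivity
      have hle : n ≤ (n + 1) * p + r := by nlinarith
      have habsorb := Nat.choose_succ_right_eq ((n + 1) * p + r) n
      rw [← add_assoc, Nat.choose_succ_succ', raney]
      refine Nat.eq_of_mul_eq_mul_left hpos ?_
      zify [hle] at *
      linear_combination ((n + 1) * p + r + 1 : ℤ) * (ihr + hprev) - (p : ℤ) * habsorb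

end Raney

section Value

open PowerSeries

theorem coeff_X_mul_mul (k : ℕ) (P Q : ℕ⟦X⟧) :
    coeff k (X * (P * Q)) = ∑ i ∈ Finset.range k, coeff i P * coeff (k - 1 - i) Q := by
  cases k with
  | zero => simp
  | succ k =>
    rw [coeff_succ_X_mul, coeff_mul, Finset.Nat.sum_antidiagonal_eq_sum_range_succ_mk,
      Nat.add_sub_cancel]

variable {α : Type*} [Fintype α] [DecidableEq α] {x : α} {t : List α} {L : List (Finset α)}

theorem factorizationCount_cons_empty_formPerm {P Q S : ℕ⟦X⟧} (h : (x :: t).Nodup)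
    (hsplit : ∀ l₁ a l₂ b l₃, t = l₁ ++ a :: (l₂ ++ b :: l₃) →
      factorizationCount ({x, a} :: L) (x :: l₁).formPerm = coeff l₁.length P ∧
      factorizationCount ({x, a} :: L) (a :: l₂).formPerm = coeff l₂.length Q ∧
      factorizationCount ({x, a} :: L) (b :: l₃).formPerm = coeff l₃.length S) :
    factorizationCount (∅ :: L) (x :: t).formPerm =
      factorizationCount ({x} :: L) (x :: t).formPerm +
        coeff t.length (X * ((X * (P * Q)) * S)) := by
  rw [factorizationCount_cons_empty x, sum_threeCyclePairs_formPerm h, coeff_X_mul_mul]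
  simp only [coeff_X_mul_mul, Finset.sum_mul]
  congr 1
  refine Finset.sum_congr rfl fun j hj => Finset.sum_congr rfl fun i hi => ?_
  obtain ⟨l₁, l₂, l₃, ht, h₁, h₂, h₃⟩ :=
    exists_eq_append_cons_append_cons (Finset.mem_range.1 hi) (Finset.mem_range.1 hj) x
  obtain ⟨hP, hQ, hS⟩ := hsplit _ _ _ _ _ ht
  have hcount := factorizationCount_threeCycle_inv_mul_formPerm (ht ▸ h)
    ({x, t.getD i x} :: L)
  rw [← ht, hP, hQ, hS] at hcount
  rw [hcount, h₁, show j - 1 - i = l₂.length by omega, show t.length - 1 - j = l₃.length by omega]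

theorem factorizationCount_formPerm_eq_zero (h : (x :: t).Nodup) (ht : t ≠ [])
    (hL : ∀ A ∈ L, x ∈ A) : factorizationCount L (x :: t).formPerm = 0 := by
  obtain ⟨y, t, rfl⟩ := List.exists_cons_of_ne_nil ht
  refine factorizationCount_eq_zero (x := x) ?_ hL
  rw [List.formPerm_apply_head _ _ _ h]
  grind

theorem exists_perm_cons_and_factorizationCount_eq (hL : ∀ A ∈ L, ∀ y ∈ t, y ∉ A)
    (hx : ∃ A ∈ L, x ∉ A) : ∃ A L', L.Perm (A :: L') ∧ x ∉ A ∧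
      factorizationCount L (x :: t).formPerm = factorizationCount (∅ :: L') (x :: t).formPerm := by
  obtain ⟨A, hA, hxA⟩ := hx
  have hmem {y : α} (hy : (x :: t).formPerm y ≠ y) : y ∈ x :: t :=
    List.mem_of_formPerm_apply_ne hy
  have hperm := List.perm_cons_erase hA
  refine ⟨A, L.erase A, hperm, hxA, ?_⟩
  rw [factorizationCount_perm (x := x) hperm, factorizationCount_cons,
    oddFactors_eq_empty_constraint, ← factorizationCount_cons]
  · exact fun y hy => by_contra fun hne => by grind
  · exact fun A hA y hyA hne => by grind

theorem factorizationCount_formPerm {m : ℕ} (hm : L.length = m + 1) (h : (x :: t).Nodup)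
    (hL : ∀ A ∈ L, ∀ y ∈ t, y ∉ A) :
    factorizationCount L (x :: t).formPerm =
      coeff t.length (raneySeries (2 * m + 1) (L.countP (x ∉ ·))) := by
  induction hk : t.length using Nat.strong_induction_on generalizing x t L with
  | _ k ih =>
  induction hs : L.countP (x ∉ ·) generalizing L with
  | zero =>
    have hx : ∀ A ∈ L, x ∈ A := by simpa using hs
    rw [raneySeries_zero, coeff_one]
    split_ifs with hk0
    · rw [List.eq_nil_of_length_eq_zero (hk.trans hk0), List.formPerm_singleton,
        factorizationCount_one]
    · exact factorizationCount_formPerm_eq_zero h (by grind) hx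
  | succ s ihs =>
    have hx : ∃ A ∈ L, x ∉ A := by
      simpa using List.countP_pos_iff.1 (hs.symm ▸ s.succ_pos : 0 < L.countP (x ∉ ·))
    obtain ⟨A, L', hperm, hxA, hcount⟩ := exists_perm_cons_and_factorizationCount_eq hL hx
    have hL' : ∀ A ∈ L', ∀ y ∈ t, y ∉ A := fun A hA => hL A (hperm.mem_iff.2 (by simp [hA]))
    have hlen : L'.length = m := by simpa [hm] using hperm.length_eq.symm
    have hs' : L'.countP (x ∉ ·) = s := by
      simpa [hs, hxA] using (hs.symm.trans (hperm.countP_eq (x ∉ ·))).symm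
    have hcountP {y : α} (hy : y ∈ t) : L'.countP (y ∉ ·) = m := by
      rw [← hlen, List.countP_eq_length]
      exact fun A hA => by simpa using hL' A hA y hy
    rw [raneySeries_two_mul_add_one_succ, map_add, ← hk, hcount,
      factorizationCount_cons_empty_formPerm h,
      ihs (L := {x} :: L') (by simp [hlen]) (by grind) (by simpa using hs'), hk]
    · rintro l₁ a l₂ b l₃ rfl
      refine ⟨?_, ?_, ?_⟩
      · rw [ih _ (by grind) (by simp [hlen]) (by grind) (by grind) rfl,
          List.countP_cons_of_neg (by simp), hs']
      · rw [ih _ (by grind) (by simp [hlen]) (by grind) (by grind) rfl,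
          List.countP_cons_of_neg (by simp), hcountP (by simp)]
      · rw [ih _ (by grind) (by simp [hlen]) (by grind) (by grind) rfl,
          List.countP_cons_of_pos (by grind), hcountP (by simp)]

end Value

section Multichain

/-- `c 0, …, c (m - 1)` is a multichain for the relation `r`, all of whose elements are below
`w`. -/
def IsMultichain {β : Type*} {m : ℕ} (r : β → β → Prop) (w : β) (c : Fin m → β) : Prop :=
  (∀ i j, i ≤ j → r (c i) (c j)) ∧ ∀ i, r (c i) w

variable {β : Type*} {r : β → β → Prop} {m : ℕ}

theorem isMultichain_snoc_iff [IsTrans β r] (hr : ∀ y z, r y z → r y y) (w y : β)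
    (c : Fin m → β) :
    IsMultichain r w (Fin.snoc c y : Fin (m + 1) → β) ↔ r y w ∧ IsMultichain r y c := by
  simp only [IsMultichain, Fin.forall_fin_succ', Fin.snoc_castSucc, Fin.snoc_last, Fin.le_last,
    Fin.castSucc_le_castSucc_iff, true_imp_iff, forall_and, Fin.last_le_iff,
    Fin.castSucc_ne_last, false_imp_iff, implies_true, and_true]
  constructor
  · rintro ⟨⟨hc, hcy, -⟩, -, hyw⟩
    exact ⟨hyw, hc, hcy⟩
  · rintro ⟨hyw, hc, hcy⟩
    exact ⟨⟨hc, hcy, hr y w hyw⟩, fun i => _root_.trans (hcy i) hyw, hyw⟩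

open Classical in
theorem card_isMultichain_succ [Fintype β] [IsTrans β r] (hr : ∀ y z, r y z → r y y) (w : β) :
    Nat.card {c : Fin (m + 1) → β // IsMultichain r w c} =
      ∑ y with r y w, Nat.card {c : Fin m → β // IsMultichain r y c} := by
  have hequiv : {c : Fin (m + 1) → β // IsMultichain r w c} ≃
      Σ y, {c : Fin m → β // r y w ∧ IsMultichain r y c} :=
    ((Fin.snocEquiv fun _ => β).subtypeEquiv fun p =>
      (isMultichain_snoc_iff hr w p.1 p.2).symm).symm.trans
        (subtypeProdEquivSigmaSubtype fun y c => r y w ∧ IsMultichain r y c)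
  rw [Nat.card_congr hequiv, Nat.card_sigma, Finset.sum_filter]
  refine Finset.sum_congr rfl fun y _ => ?_
  split_ifs with hy <;> simp [hy]

instance {α : Type*} [Finite α] : IsTrans (Perm α) OddPrefix :=
  ⟨fun _ _ _ => OddPrefix.trans⟩

variable {α : Type*} [Fintype α] [DecidableEq α] {w : Perm α}

open Classical in
theorem factorizationCount_replicate_empty_succ (k : ℕ) (w : Perm α) :
    factorizationCount (List.replicate (k + 1) ∅) w =
      ∑ y with OddPrefix y w, factorizationCount (List.replicate k ∅) y := by
  have hfilter : {u ∈ oddFactors ∅ w | Odd (orderOf (u⁻¹ * w))} =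
      ({y | OddPrefix y w} : Finset (Perm α)) := by
    ext u
    simp only [Finset.mem_filter, Finset.mem_univ, true_and, mem_oddFactors, Finset.notMem_empty,
      false_imp_iff, implies_true]
    exact ⟨fun ⟨⟨hu, hp⟩, h⟩ => ⟨hp, hu, h⟩, fun ⟨hp, hu, h⟩ => ⟨⟨hu, hp⟩, h⟩⟩
  have hmaps : Set.MapsTo (fun u => u⁻¹ * w) ({y | OddPrefix y w} : Finset (Perm α))
      ({y | OddPrefix y w} : Finset (Perm α)) := by
    simpa [Set.MapsTo] using fun u => OddPrefix.inv_mul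
  have hinj : Function.Injective fun u : Perm α => u⁻¹ * w :=
    (mul_left_injective w).comp inv_injective
  rw [List.replicate_succ, factorizationCount_cons, ← Finset.sum_filter_of_ne
    fun u _ h => odd_orderOf_of_factorizationCount_ne_zero h, hfilter]
  exact Finset.sum_nbij (fun u => u⁻¹ * w) hmaps hinj.injOn
    (Finset.surjOn_of_injOn_of_card_le _ hmaps hinj.injOn le_rfl) fun _ _ => rfl

theorem factorizationCount_singleton_empty (hw : Odd (orderOf w)) :
    factorizationCount [∅] w = 1 := by
  classical
  have hone : OddPrefix 1 w := by simpa using (OddPrefix.refl hw).inv_mul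
  rw [← List.replicate_one, factorizationCount_replicate_empty_succ]
  simp [factorizationCount, hone]

theorem card_isMultichain_oddPrefix (hw : Odd (orderOf w)) :
    Nat.card {c : Fin m → Perm α // IsMultichain OddPrefix w c} =
      factorizationCount (List.replicate (m + 1) ∅) w := by
  classical
  induction m generalizing w with
  | zero =>
    rw [List.replicate_one, factorizationCount_singleton_empty hw]
    simp [IsMultichain]
  | succ m ih =>
    rw [card_isMultichain_succ fun _ _ h => OddPrefix.refl h.odd_orderOf,
      factorizationCount_replicate_empty_succ]
    exact Finset.sum_congr rfl fun y hy => ih (Finset.mem_filter.1 hy).2.odd_orderOf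

theorem isMultichain_leT_iff_oddPrefix (hw : Odd (orderOf w))
    (h : w ≠ 1 ∨ ∀ u : Perm α, sign u = 1) (c : Fin m → Perm α) :
    IsMultichain (leT {t : Perm α | t.IsThreeCycle}) w c ↔ IsMultichain OddPrefix w c := by
  have htop (u : Perm α) : leT {t : Perm α | t.IsThreeCycle} u w ↔ OddPrefix u w :=
    leT_iff_oddPrefix hw (by tauto)
  simp only [IsMultichain, htop]
  refine and_congr_left fun hc => forall₃_congr fun i j _ => ?_
  exact leT_iff_oddPrefix (hc j).odd_orderOf (.inl (sign_of_odd_orderOf (hc i).odd_orderOf))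

end Multichain

section Rotation

theorem finRotate_succ_eq_formPerm (N : ℕ) :
    finRotate (N + 1) = (0 :: (List.finRange N).map Fin.succ).formPerm := by
  rw [← List.finRange_succ]
  ext i
  have h := List.formPerm_apply_getElem _ (List.nodup_finRange (N + 1)) i (by simp [i.is_le])
  simp only [List.getElem_finRange, List.length_finRange, Fin.cast_mk, Fin.eta] at h
  simp [h, Fin.val_add]

theorem nodup_zero_cons_map_succ_finRange (N : ℕ) :
    (0 :: (List.finRange N).map Fin.succ).Nodup :=
  List.finRange_succ ▸ List.nodup_finRange (N + 1)

theorem odd_orderOf_finRotate (n : ℕ) : Odd (orderOf (finRotate (2 * n + 1))) := by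
  rw [finRotate_succ_eq_formPerm, orderOf_formPerm_cons (nodup_zero_cons_map_succ_finRange _)]
  simp

theorem finRotate_ne_one_or_forall_sign_eq_one (N : ℕ) :
    finRotate (N + 1) ≠ 1 ∨ ∀ u : Perm (Fin (N + 1)), sign u = 1 := by
  rcases N with _ | N
  · have : Subsingleton (Fin (0 + 1)) := inferInstanceAs (Subsingleton (Fin 1))
    exact .inr fun u => by rw [Subsingleton.elim u 1, map_one]
  · exact .inl isCycle_finRotate.ne_one

theorem factorizationCount_finRotate (n m : ℕ) :
    factorizationCount (List.replicate (m + 1) ∅) (finRotate (2 * n + 1)) =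
      raney (2 * m + 1) (m + 1) n := by
  rw [finRotate_succ_eq_formPerm, factorizationCount_formPerm List.length_replicate
    (nodup_zero_cons_map_succ_finRange _) (by simp), List.countP_replicate, if_pos (by simp),
    List.length_map, List.length_finRange, coeff_two_mul_raneySeries]

theorem card_isMultichain_finRotate (n m : ℕ) :
    Nat.card {c : Fin m → Perm (Fin (2 * n + 1)) //
      IsMultichain (leT (threeCycles (2 * n + 1))) (finRotate (2 * n + 1)) c} =
        raney (2 * m + 1) (m + 1) n := by
  rw [threeCycles, Nat.card_congr (subtypeEquivRight (isMultichain_leT_iff_oddPrefix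
    (odd_orderOf_finRotate n) (finRotate_ne_one_or_forall_sign_eq_one _))),
    card_isMultichain_oddPrefix (odd_orderOf_finRotate n), factorizationCount_finRotate]

end Rotation

/-- Theorem: the zeta polynomial of `[e,c]₃ ⊆ (A_{2n+1}, ≤₃)`, stated as: for every
positive integer `q = m+1`, the number of `(q-1)`-multichains in `[e,c]₃` equals
`q/(q(2n+1)-n) · C(q(2n+1)-n, n)`. -/
theorem stmt15 (n m : ℕ) :
    (Nat.card {c : Fin m → Perm (Fin (2*n+1)) //
        (∀ i j, i ≤ j → leT (threeCycles (2*n+1)) (c i) (c j)) ∧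
        ∀ i, leT (threeCycles (2*n+1)) (c i) (finRotate (2*n+1))} : ℚ)
      = ((m+1 : ℚ) / ((m+1)*(2*n+1) - n)) *
          (Nat.choose ((m+1)*(2*n+1) - n) n : ℚ) := by
  have hcard := card_isMultichain_finRotate n m
  have hraney := raney_mul_eq_mul_choose (by omega : 0 < 2 * m + 1) (m + 1) n
  have harg : (m + 1) * (2 * n + 1) - n = n * (2 * m + 1) + (m + 1) := by
    rw [Nat.sub_eq_iff_eq_add (by nlinarith)]
    ring
  have hcast : ((m + 1) * (2 * n + 1) - n : ℚ) = (n * (2 * m + 1) + (m + 1) : ℕ) := by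
    push_cast
    ring
  simp only [IsMultichain] at hcard
  rw [hcard, harg, hcast, div_mul_eq_mul_div, eq_div_iff (by positivity), mul_comm]
  exact_mod_cast hraney
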